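/- arXiv:2401.17900 — 7 statements merged into one kernel-verified Lean document; each statement's English description precedes it below -/
import Mathlib

section
/- Let (ν_n) be a sequence of finite nonnegative Borel measures on ℝ and ν a finite nonnegative Borel measure on ℝ. Assume there exists T > 0 such that for every t ∈ [0,T] the integrals ∫_ℝ e^{-λt} ν_n(dλ) (for every n) and ∫_ℝ e^{-λt} ν(dλ) are finite, and ∫_ℝ e^{-λt} ν_n(dλ) → ∫_ℝ e^{-λt} ν(dλ) as n → ∞. Then ν_n converges weakly to ν, i.e. ∫_ℝ f dν_n → ∫_ℝ f dν for every bounded continuous function f : ℝ → ℝ. -/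
open MeasureTheory Filter Topology

/-- Vague compactness of bounded families of finite measures, along an ultrafilter. -/
lemma vague_compact (ρ : ℕ → Measure ℝ) (hρ : ∀ n, IsFiniteMeasure (ρ n)) (C : NNReal)
    (hC : ∀ n, ρ n Set.univ ≤ C) (U : Ultrafilter ℕ) :
    ∃ ρ' : Measure ℝ, IsFiniteMeasure ρ' ∧ ∀ g : ℝ → ℝ, Continuous g →
      Tendsto g (cocompact ℝ) (𝓝 0) →
      Tendsto (fun n => ∫ x, g x ∂(ρ n)) U (𝓝 (∫ x, g x ∂ρ')) := by
  letI : MeasurableSpace (OnePoint ℝ) := borel _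
  haveI : BorelSpace (OnePoint ℝ) := ⟨rfl⟩
  have hemb : MeasurableEmbedding ((↑) : ℝ → OnePoint ℝ) :=
    OnePoint.isOpenEmbedding_coe.measurableEmbedding
  let P : ℕ → FiniteMeasure (OnePoint ℝ) := fun n =>
    ⟨(ρ n).map ((↑) : ℝ → OnePoint ℝ), inferInstance⟩
  have hP : ∀ n, (P n).mass ≤ C := by
    intro n
    rw [← ENNReal.coe_le_coe, FiniteMeasure.ennreal_mass]
    change ((ρ n).map ((↑) : ℝ → OnePoint ℝ)) Set.univ ≤ C
    rw [hemb.map_apply]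
    simpa using hC n
  obtain ⟨Q, -, hQ⟩ := (isCompact_setOfPred_finiteMeasure_le_of_compactSpace
    (OnePoint ℝ) C).ultrafilter_le_nhds (U.map P) (by
      rw [le_principal_iff]
      exact Filter.mem_map.2 (Filter.univ_mem' hP))
  have hQ' : Tendsto P U (𝓝 Q) := hQ
  rw [FiniteMeasure.tendsto_iff_forall_integral_tendsto] at hQ'
  refine ⟨(Q : Measure (OnePoint ℝ)).comap ((↑) : ℝ → OnePoint ℝ), ?_, ?_⟩
  · constructor
    rw [hemb.comap_apply]
    exact measure_lt_top _ _
  intro g hg hg0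
  let G : OnePoint ℝ → ℝ := fun x => OnePoint.elim x 0 g
  have hGc : Continuous G := by
    rw [OnePoint.continuous_iff]
    refine ⟨?_, hg⟩
    rw [coclosedCompact_eq_cocompact]
    exact hg0
  let F : BoundedContinuousFunction (OnePoint ℝ) ℝ :=
    BoundedContinuousFunction.mkOfCompact ⟨G, hGc⟩
  have h1 := hQ' F
  have e1 : ∀ n, ∫ x, F x ∂(P n : Measure (OnePoint ℝ)) = ∫ x, g x ∂(ρ n) := by
    intro n
    change ∫ x, G x ∂((ρ n).map ((↑) : ℝ → OnePoint ℝ)) = _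
    rw [hemb.integral_map]
    rfl
  have e2 : ∫ x, F x ∂(Q : Measure (OnePoint ℝ)) =
      ∫ x, g x ∂((Q : Measure (OnePoint ℝ)).comap ((↑) : ℝ → OnePoint ℝ)) := by
    change ∫ x, G x ∂(Q : Measure (OnePoint ℝ)) =
      ∫ x : ℝ, G (x : OnePoint ℝ) ∂((Q : Measure (OnePoint ℝ)).comap ((↑) : ℝ → OnePoint ℝ))
    rw [← hemb.integral_map, hemb.map_comap]
    symm
    apply setIntegral_eq_integral_of_forall_compl_eq_zero
    intro x hx
    induction x using OnePoint.rec with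
    | infty => rfl
    | coe y => exact absurd ⟨y, rfl⟩ hx
  simp_rw [e1, e2] at h1
  exact h1

lemma laplace_unique (μ τ : Measure ℝ) [IsFiniteMeasure μ] [IsFiniteMeasure τ] (T : ℝ) (hT : 0 < T)
    (h1 : ∀ t ∈ Set.Ioo 0 T, Integrable (fun l => Real.exp (-l * t)) μ)
    (h2 : ∀ t ∈ Set.Ioo 0 T, Integrable (fun l => Real.exp (-l * t)) τ)
    (h3 : ∀ t ∈ Set.Ioo 0 T, ∫ l, Real.exp (-l * t) ∂μ = ∫ l, Real.exp (-l * t) ∂τ) :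
    μ = τ := by
  have sub : ∀ κ : Measure ℝ, (∀ t ∈ Set.Ioo 0 T, Integrable (fun l => Real.exp (-l * t)) κ) →
      Set.Ioo (-T) 0 ⊆ interior (ProbabilityTheory.integrableExpSet id κ) := by
    intro κ hκ
    apply interior_maximal _ isOpen_Ioo
    intro t ht
    have := hκ (-t) ⟨by linarith [ht.2], by linarith [ht.1]⟩
    simpa [ProbabilityTheory.integrableExpSet, mul_comm] using this
  have hpre : IsPreconnected {z : ℂ | z.re ∈ Set.Ioo (-T) 0} :=
    ((convex_Ioo (-T) 0).linear_preimage Complex.reLm).isPreconnected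
  have key : Set.EqOn (ProbabilityTheory.complexMGF id μ) (ProbabilityTheory.complexMGF id τ)
      {z : ℂ | z.re ∈ Set.Ioo (-T) 0} := by
    refine AnalyticOnNhd.eqOn_of_preconnected_of_frequently_eq
      (ProbabilityTheory.analyticOnNhd_complexMGF.mono fun z hz => sub μ h1 hz)
      (ProbabilityTheory.analyticOnNhd_complexMGF.mono fun z hz => sub τ h2 hz)
      hpre (z₀ := ((-T/2 : ℝ) : ℂ)) ?_ ?_
    · change (((-T/2 : ℝ) : ℂ)).re ∈ Set.Ioo (-T) 0
      rw [Complex.ofReal_re]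
      constructor <;> linarith
    have h_real : ∃ᶠ (x : ℝ) in 𝓝[≠] (-T/2), ProbabilityTheory.complexMGF id μ x
        = ProbabilityTheory.complexMGF id τ x := by
      apply Filter.Eventually.frequently
      apply nhdsWithin_le_nhds
      filter_upwards [isOpen_Ioo.mem_nhds (show -T/2 ∈ Set.Ioo (-T) 0 by
        constructor <;> linarith)] with x hx
      rw [ProbabilityTheory.complexMGF_ofReal, ProbabilityTheory.complexMGF_ofReal]
      have := h3 (-x) ⟨by linarith [hx.2], by linarith [hx.1]⟩
      simp only [neg_mul_neg] at this
      simp only [ProbabilityTheory.mgf, id, mul_comm x, this]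
    rw [frequently_iff_seq_forall] at h_real ⊢
    obtain ⟨xs, hx_tendsto, hx_eq⟩ := h_real
    refine ⟨fun n ↦ xs n, ?_, fun n ↦ ?_⟩
    · rw [tendsto_nhdsWithin_iff] at hx_tendsto ⊢
      constructor
      · exact (Complex.continuous_ofReal.tendsto _).comp hx_tendsto.1
      · simpa only [Set.mem_compl_iff, Set.mem_singleton_iff, Complex.ofReal_inj] using hx_tendsto.2
    · exact hx_eq n
  let w : ℝ → ENNReal := fun l => ENNReal.ofReal (Real.exp (-l * (T/2)))
  have hw : Measurable w := by fun_prop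
  have hmem : T/2 ∈ Set.Ioo 0 T := by constructor <;> linarith
  haveI : IsFiniteMeasure (μ.withDensity w) :=
    isFiniteMeasure_withDensity_ofReal (h1 _ hmem).2
  haveI : IsFiniteMeasure (τ.withDensity w) :=
    isFiniteMeasure_withDensity_ofReal (h2 _ hmem).2
  have hchar : ∀ (κ : Measure ℝ) (s : ℝ), charFun (κ.withDensity w) s =
      ProbabilityTheory.complexMGF id κ (((-T/2 : ℝ) : ℂ) + s * Complex.I) := by
    intro κ s
    rw [charFun_apply_real, integral_withDensity_eq_integral_toReal_smul hw
      (Eventually.of_forall fun x => ENNReal.ofReal_lt_top), ProbabilityTheory.complexMGF]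
    congr 1
    ext x
    simp only [w, ENNReal.toReal_ofReal (Real.exp_pos _).le, id, Complex.real_smul,
      Complex.ofReal_exp]
    rw [← Complex.exp_add]
    congr 1
    push_cast
    ring
  have heq : μ.withDensity w = τ.withDensity w := by
    apply Measure.ext_of_charFun
    ext s
    rw [hchar, hchar]
    apply key
    change (((-T/2 : ℝ) : ℂ) + s * Complex.I).re ∈ Set.Ioo (-T) 0
    have hre : (((-T/2 : ℝ) : ℂ) + s * Complex.I).re = -T/2 := by
      rw [Complex.add_re, Complex.ofReal_re, Complex.re_ofReal_mul, Complex.I_re, mul_zero, add_zero]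
    rw [hre]
    constructor <;> linarith
  have hinv : ∀ κ : Measure ℝ, (κ.withDensity w).withDensity (fun x => (w x)⁻¹) = κ := fun κ =>
    withDensity_inv_same hw (Eventually.of_forall fun x => by simp [w, Real.exp_pos])
      (Eventually.of_forall fun x => ENNReal.ofReal_ne_top)
  rw [← hinv μ, ← hinv τ, heq]

lemma weak_of_vague (ν : ℕ → Measure ℝ) (μ : Measure ℝ)
    (hν : ∀ n, IsFiniteMeasure (ν n)) (hμ : IsFiniteMeasure μ)
    (hmass : Tendsto (fun n => ∫ _, (1:ℝ) ∂(ν n)) atTop (𝓝 (∫ _, (1:ℝ) ∂μ)))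
    (hc : ∀ g : ℝ → ℝ, Continuous g → HasCompactSupport g →
      Tendsto (fun n => ∫ x, g x ∂(ν n)) atTop (𝓝 (∫ x, g x ∂μ)))
    (f : BoundedContinuousFunction ℝ ℝ) :
    Tendsto (fun n => ∫ x, f x ∂(ν n)) atTop (𝓝 (∫ x, f x ∂μ)) := by
  let χ : ℕ → ℝ → ℝ := fun k x => max 0 (min 1 (k + 1 - |x|))
  have χc : ∀ k, Continuous (χ k) := fun k => by fun_prop
  have χ0 : ∀ k x, 0 ≤ χ k x := fun k x => le_max_left _ _
  have χ1 : ∀ k x, χ k x ≤ 1 := fun k x => max_le zero_le_one (min_le_left _ _)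
  have χs : ∀ k, HasCompactSupport (χ k) := by
    intro k
    apply HasCompactSupport.intro (isCompact_Icc (a := -(k+1:ℝ)) (b := k+1))
    intro x hx
    have : (k:ℝ) + 1 < |x| := by
      by_contra! hcon
      exact hx (abs_le.mp hcon)
    exact max_eq_left ((min_le_right _ _).trans (by linarith))
  have χi : ∀ k (κ : Measure ℝ) [IsFiniteMeasure κ], Integrable (χ k) κ := by
    intro k κ _
    exact Integrable.of_bound (χc k).aestronglyMeasurable 1
      (Eventually.of_forall fun x => by
        rw [Real.norm_of_nonneg (χ0 k x)]; exact χ1 k x)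
  have bound : ∀ k (κ : Measure ℝ) [IsFiniteMeasure κ],
      |∫ x, f x ∂κ - ∫ x, f x * χ k x ∂κ| ≤ ‖f‖ * (∫ _, (1:ℝ) ∂κ - ∫ x, χ k x ∂κ) := by
    intro k κ _
    have hfi : Integrable (fun x => f x) κ := f.integrable κ
    have hfχ : Integrable (fun x => f x * χ k x) κ := by
      refine Integrable.mono hfi ((f.continuous.mul (χc k)).aestronglyMeasurable)
        (Eventually.of_forall fun x => ?_)
      rw [norm_mul, Real.norm_of_nonneg (χ0 k x)]
      exact mul_le_of_le_one_right (norm_nonneg _) (χ1 k x)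
    rw [← integral_sub hfi hfχ, ← integral_sub (integrable_const _) (χi k κ),
      ← integral_const_mul, ← Real.norm_eq_abs]
    refine norm_integral_le_of_norm_le
      (((integrable_const _).sub (χi k κ)).const_mul _) (Eventually.of_forall fun x => ?_)
    have : f x - f x * χ k x = f x * (1 - χ k x) := by ring
    rw [this, norm_mul, Real.norm_of_nonneg (sub_nonneg.2 (χ1 k x))]
    exact mul_le_mul_of_nonneg_right (f.norm_coe_le_norm x) (sub_nonneg.2 (χ1 k x))
  have χlim : Tendsto (fun k => ∫ x, χ k x ∂μ) atTop (𝓝 (∫ _, (1:ℝ) ∂μ)) := by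
    refine tendsto_integral_of_dominated_convergence (fun _ => 1)
      (fun k => (χc k).aestronglyMeasurable) (integrable_const _)
      (fun k => Eventually.of_forall fun x => by
        rw [Real.norm_of_nonneg (χ0 k x)]; exact χ1 k x)
      (Eventually.of_forall fun x => ?_)
    apply tendsto_const_nhds.congr'
    filter_upwards [eventually_ge_atTop ⌈|x|⌉₊] with k hk
    have : |x| ≤ k := Nat.ceil_le.mp hk
    change 1 = max 0 (min 1 ((k:ℝ) + 1 - |x|))
    rw [min_eq_left (by linarith), max_eq_right zero_le_one]
  rw [Metric.tendsto_atTop']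
  intro ε hε
  have hk : Tendsto (fun k => 2 * (‖f‖ * (∫ _, (1:ℝ) ∂μ - ∫ x, χ k x ∂μ))) atTop (𝓝 0) := by
    have := ((tendsto_const_nhds (x := ∫ _, (1:ℝ) ∂μ)).sub χlim).const_mul ‖f‖ |>.const_mul 2
    simpa using this
  obtain ⟨k, hk⟩ := (hk.eventually (gt_mem_nhds hε)).exists
  have hfin : Tendsto (fun n => ‖f‖ * (∫ _, (1:ℝ) ∂(ν n) - ∫ x, χ k x ∂(ν n)) +
      |∫ x, f x * χ k x ∂(ν n) - ∫ x, f x * χ k x ∂μ| +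
      ‖f‖ * (∫ _, (1:ℝ) ∂μ - ∫ x, χ k x ∂μ)) atTop
      (𝓝 (‖f‖ * (∫ _, (1:ℝ) ∂μ - ∫ x, χ k x ∂μ) +
      |∫ x, f x * χ k x ∂μ - ∫ x, f x * χ k x ∂μ| +
      ‖f‖ * (∫ _, (1:ℝ) ∂μ - ∫ x, χ k x ∂μ))) := by
    refine (((hmass.sub (hc _ (χc k) (χs k))).const_mul _).add ?_).add tendsto_const_nhds
    exact ((hc _ (f.continuous.mul (χc k)) (χs k).mul_left).sub tendsto_const_nhds).abs
  have hlt := hfin.eventually_lt_const (u := ε) (by rw [sub_self, abs_zero]; linarith)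
  obtain ⟨N, hN⟩ := eventually_atTop.1 hlt
  refine ⟨N, fun n hn => ?_⟩
  have hn' := hN n hn.le
  have b1 := bound k (ν n)
  have b2 := bound k μ
  rw [Real.dist_eq]
  rw [abs_le] at b1 b2
  have b3 := abs_le.1 (le_refl |∫ x, f x * χ k x ∂(ν n) - ∫ x, f x * χ k x ∂μ|)
  rw [abs_lt]
  constructor <;> linarith [b1.1, b1.2, b2.1, b2.2, b3.1, b3.2]

lemma g_tendsto (T t : ℝ) (ht : t ∈ Set.Ioo 0 T) :
    Tendsto (fun l : ℝ => (1 + Real.exp (-l * T))⁻¹ * Real.exp (-l * t)) (cocompact ℝ) (𝓝 0) := by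
  rw [cocompact_eq_atBot_atTop, tendsto_sup]
  have pos : ∀ l : ℝ, 0 ≤ (1 + Real.exp (-l * T))⁻¹ * Real.exp (-l * t) := fun l => by positivity
  constructor
  · refine squeeze_zero pos (g := fun l => Real.exp (l * (T - t))) (fun l => ?_) ?_
    · rw [inv_mul_le_iff₀ (by positivity), add_mul, ← Real.exp_add]
      have : -l * T + l * (T - t) = -l * t := by ring
      rw [this]
      linarith [Real.exp_pos (l * (T - t))]
    · exact Real.tendsto_exp_atBot.comp (tendsto_id.atBot_mul_const (sub_pos.2 ht.2))
  · refine squeeze_zero pos (g := fun l => Real.exp (-l * t)) (fun l => ?_) ?_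
    · rw [inv_mul_le_iff₀ (by positivity), add_mul, one_mul]
      have : 0 < Real.exp (-l * T) * Real.exp (-l * t) := by positivity
      linarith
    · exact Real.tendsto_exp_atBot.comp (tendsto_neg_atTop_atBot.atBot_mul_const ht.1)

lemma integral_wd (κ : Measure ℝ) (w : ℝ → ℝ) (hw : Continuous w) (h0 : ∀ x, 0 ≤ w x)
    (g : ℝ → ℝ) :
    ∫ x, g x ∂(κ.withDensity fun x => ENNReal.ofReal (w x)) = ∫ x, w x * g x ∂κ := by
  rw [integral_withDensity_eq_integral_toReal_smul (by fun_prop)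
      (Eventually.of_forall fun x => ENNReal.ofReal_lt_top)]
  simp [ENNReal.toReal_ofReal, h0]

theorem laplace_transform_convergence_implies_weak_convergence
    (ν : ℕ → Measure ℝ) (μ : Measure ℝ)
    (hν : ∀ n, IsFiniteMeasure (ν n)) (hμ : IsFiniteMeasure μ)
    (h : ∃ T > (0:ℝ), ∀ t ∈ Set.Icc (0:ℝ) T,
      (∀ n, Integrable (fun l => Real.exp (-l * t)) (ν n)) ∧
      Integrable (fun l => Real.exp (-l * t)) μ ∧
      Tendsto (fun n => ∫ l, Real.exp (-l * t) ∂(ν n)) atTop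
        (𝓝 (∫ l, Real.exp (-l * t) ∂μ))) :
    ∀ f : BoundedContinuousFunction ℝ ℝ,
      Tendsto (fun n => ∫ x, f x ∂(ν n)) atTop (𝓝 (∫ x, f x ∂μ)) := by
  obtain ⟨T, hT, h⟩ := h
  have hmass : Tendsto (fun n => ∫ _, (1:ℝ) ∂(ν n)) atTop (𝓝 (∫ _, (1:ℝ) ∂μ)) := by
    simpa only [mul_zero, Real.exp_zero] using (h 0 ⟨le_rfl, hT.le⟩).2.2
  apply weak_of_vague ν μ hν hμ hmass
  intro f hf hfs
  obtain ⟨hTi, hTμ, hTlim⟩ := h T ⟨hT.le, le_rfl⟩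
  let w : ℝ → ℝ := fun l => 1 + Real.exp (-l * T)
  have hwc : Continuous w := by fun_prop
  have hwp : ∀ x, 0 < w x := fun x => by positivity
  have hw1 : ∀ x, 1 ≤ w x := fun x => by
    have := Real.exp_pos (-x * T)
    simp only [w]; linarith
  have hwi : ∀ n, Integrable w (ν n) := fun n => (integrable_const _).add (hTi n)
  let ρ : ℕ → Measure ℝ := fun n => (ν n).withDensity fun x => ENNReal.ofReal (w x)
  have hρ : ∀ n, IsFiniteMeasure (ρ n) := fun n =>
    isFiniteMeasure_withDensity_ofReal (hwi n).2
  have hwlim : Tendsto (fun n => ∫ l, w l ∂(ν n)) atTop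
      (𝓝 (∫ _, (1:ℝ) ∂μ + ∫ l, Real.exp (-l * T) ∂μ)) := by
    refine (hmass.add hTlim).congr fun n => ?_
    exact (integral_add (integrable_const _) (hTi n)).symm
  obtain ⟨C, hC⟩ := hwlim.bddAbove_range
  have hρC : ∀ n, ρ n Set.univ ≤ (C.toNNReal : ENNReal) := by
    intro n
    simp only [ρ]
    rw [withDensity_apply _ MeasurableSet.univ, Measure.restrict_univ,
      ← ofReal_integral_eq_lintegral_ofReal (hwi n) (Eventually.of_forall fun x => (hwp x).le)]
    exact ENNReal.ofReal_le_ofReal (hC ⟨n, rfl⟩)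
  rw [Filter.tendsto_iff_ultrafilter]
  intro U hU
  obtain ⟨ρ', hρ', hlim⟩ := vague_compact ρ hρ _ hρC U
  have hvc : Continuous fun x => (w x)⁻¹ := hwc.inv₀ fun x => (hwp x).ne'
  have hv0 : ∀ x, 0 ≤ (w x)⁻¹ := fun x => (inv_pos.2 (hwp x)).le
  let τ : Measure ℝ := ρ'.withDensity fun x => ENNReal.ofReal (w x)⁻¹
  have hvi : Integrable (fun x => (w x)⁻¹) ρ' :=
    Integrable.of_bound hvc.aestronglyMeasurable 1 (Eventually.of_forall fun x => by
      rw [Real.norm_of_nonneg (hv0 x)]; exact inv_le_one_of_one_le₀ (hw1 x))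
  haveI : IsFiniteMeasure τ := isFiniteMeasure_withDensity_ofReal hvi.2
  -- transfer of limits
  have trans : ∀ g : ℝ → ℝ, Continuous g →
      Tendsto (fun x => (w x)⁻¹ * g x) (cocompact ℝ) (𝓝 0) →
      Tendsto (fun n => ∫ x, g x ∂(ν n)) U (𝓝 (∫ x, g x ∂τ)) := by
    intro g hg hg0
    have := hlim _ (hvc.mul hg) hg0
    simp only [τ]
    rw [integral_wd ρ' _ hvc hv0]
    refine this.congr fun n => ?_
    simp only [ρ]
    rw [integral_wd (ν n) w hwc (fun x => (hwp x).le)]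
    congr 1
    ext x
    rw [Pi.mul_apply, mul_inv_cancel_left₀ (hwp x).ne']
  have hτ : μ = τ := by
    refine laplace_unique μ τ T hT (fun t ht => (h t ⟨ht.1.le, ht.2.le⟩).2.1) ?_ ?_
    · intro t ht
      simp only [τ]
      rw [integrable_withDensity_iff_integrable_smul' (by fun_prop)
        (Eventually.of_forall fun x => ENNReal.ofReal_lt_top)]
      simp only [ENNReal.toReal_ofReal (hv0 _), smul_eq_mul]
      have hgc : Continuous fun x => (w x)⁻¹ * Real.exp (-x * t) := by fun_prop
      refine Integrable.of_bound hgc.aestronglyMeasurable 1 (Eventually.of_forall fun x => ?_)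
      rw [Real.norm_of_nonneg (mul_nonneg (hv0 x) (Real.exp_pos _).le),
        inv_mul_le_iff₀ (hwp x), mul_one]
      simp only [w]
      rcases le_total 0 x with hx | hx
      · have : Real.exp (-x * t) ≤ 1 := Real.exp_le_one_iff.2 (by nlinarith [ht.1])
        linarith [Real.exp_pos (-x * T)]
      · have : Real.exp (-x * t) ≤ Real.exp (-x * T) :=
          Real.exp_le_exp.2 (by nlinarith [ht.2])
        linarith
    · intro t ht
      exact tendsto_nhds_unique ((h t ⟨ht.1.le, ht.2.le⟩).2.2.mono_left hU)
        (trans _ (by fun_prop) (g_tendsto T t ht))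
  rw [hτ]
  refine trans f hf ?_
  have : HasCompactSupport fun x => (w x)⁻¹ * f x := hfs.mul_left
  exact this.is_zero_at_infty
end

section
/- Let U ⊆ ℂ be open and connected, let (g_n) be a sequence of functions holomorphic on U which is uniformly bounded on U (there exists M such that |g_n(z)| ≤ M for all n and all z ∈ U), let g be holomorphic on U, and let S ⊆ U be a set having an accumulation point belonging to U. If g_n(z) → g(z) as n → ∞ for every z ∈ S, then g_n → g locally uniformly on U. -/
open Filter Topology

lemma vitali_aux_local (U : Set ℂ) (hU : IsOpen U)
    (g : ℕ → ℂ → ℂ) (hg : ∀ n, DifferentiableOn ℂ (g n) U)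
    (M : ℝ) (hM : ∀ n, ∀ z ∈ U, ‖g n z‖ ≤ M) (l : Filter ℕ) [l.NeBot] (h : ℂ → ℂ)
    (hh : ∀ z ∈ U, Tendsto (fun n => g n z) l (𝓝 (h z))) :
    TendstoLocallyUniformlyOn g h l U := by
  rw [Metric.tendstoLocallyUniformlyOn_iff]
  intro ε hε c hc
  obtain ⟨R, hR, hRU⟩ := Metric.isOpen_iff.1 hU c hc
  have hM0 : 0 ≤ M := (norm_nonneg _).trans (hM 0 c hc)
  set C : ℝ := (2 * M + 1) / R with hC
  have hCpos : 0 < C := by positivity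
  have key : ∀ n, ∀ w ∈ Metric.ball c R, dist (g n w) (g n c) ≤ C * dist w c := by
    intro n w hw
    refine Complex.dist_le_div_mul_dist_of_mapsTo_ball ((hg n).mono hRU) ?_ hw
    intro x hx
    have h1 := hM n x (hRU hx)
    have h2 := hM n c hc
    have h3 := norm_sub_le (g n x) (g n c)
    simp only [Metric.mem_closedBall, dist_eq_norm]
    linarith
  have keyh : ∀ w ∈ Metric.ball c R, dist (h w) (h c) ≤ C * dist w c := fun w hw =>
    le_of_tendsto ((hh w (hRU hw)).dist (hh c hc)) (Eventually.of_forall fun n => key n w hw)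
  refine ⟨Metric.ball c (min R (ε / (3 * C))),
    mem_nhdsWithin_of_mem_nhds (Metric.ball_mem_nhds _ (by positivity)), ?_⟩
  filter_upwards [Metric.tendsto_nhds.1 (hh c hc) (ε / 3) (by positivity)] with n hn w hw
  have hw' := lt_min_iff.1 (Metric.mem_ball.1 hw)
  have a1 := key n w hw'.1
  have a2 := keyh w hw'.1
  have a3 : C * dist w c < ε / 3 := by
    have := mul_lt_mul_of_pos_left hw'.2 hCpos
    have e : C * (ε / (3 * C)) = ε / 3 := by field_simp
    linarith
  have t1 := dist_triangle4 (h w) (h c) (g n c) (g n w)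
  rw [dist_comm (h c), dist_comm (g n c) (g n w)] at t1
  linarith

theorem vitali_uniformly_bounded_holomorphic
    (U : Set ℂ) (hU : IsOpen U) (hUconn : IsConnected U)
    (g : ℕ → ℂ → ℂ) (hg : ∀ n, DifferentiableOn ℂ (g n) U)
    (M : ℝ) (hM : ∀ n, ∀ z ∈ U, ‖g n z‖ ≤ M)
    (f : ℂ → ℂ) (hf : DifferentiableOn ℂ f U)
    (S : Set ℂ) (hS : S ⊆ U)
    (z₀ : ℂ) (hz₀U : z₀ ∈ U) (hz₀acc : AccPt z₀ (principal S))
    (hconv : ∀ z ∈ S, Tendsto (fun n => g n z) atTop (𝓝 (f z))) :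
    TendstoLocallyUniformlyOn (fun n => g n) f atTop U := by
  refine vitali_aux_local U hU g hg M hM atTop f fun z hz => ?_
  rw [tendsto_iff_ultrafilter]
  intro u hu
  have hex : ∀ w, ∃ y, w ∈ U → Tendsto (fun n => g n w) (u : Filter ℕ) (𝓝 y) := by
    intro w
    by_cases hw : w ∈ U
    · obtain ⟨y, -, hy⟩ := (isCompact_closedBall (0 : ℂ) M).ultrafilter_le_nhds'
        (u.map fun n => g n w) (Ultrafilter.mem_map.2 (Filter.univ_mem' fun n => by
          simpa using hM n w hw))
      exact ⟨y, fun _ => hy⟩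
    · exact ⟨0, fun h => absurd h hw⟩
  choose h hh using hex
  have hloc := vitali_aux_local U hU g hg M hM u h hh
  have hdiff : DifferentiableOn ℂ h U :=
    hloc.differentiableOn (Eventually.of_forall hg) hU
  have heq : Set.EqOn h f U := by
    refine (hdiff.analyticOnNhd hU).eqOn_of_preconnected_of_frequently_eq
      (hf.analyticOnNhd hU) hUconn.isPreconnected hz₀U ?_
    refine (accPt_iff_frequently_nhdsNE.1 hz₀acc).mono fun w hw => ?_
    exact tendsto_nhds_unique (hh w (hS hw)) ((hconv w hw).mono_left hu)
  rw [← heq hz]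
  exact hh z hz
end

section
/- There exists a constant C > 0 such that for every x ∈ ℝ² with x ≠ 0 and every δ ∈ (0,1]: |∇G(x)| ≤ C/|x| and |∇G_δ(x)| ≤ C/|x|. -/
open MeasureTheory

/-- `G(x) = -(2π)⁻¹ log|x| χ(x)` (note `Real.log 0 = 0`, so `G 0 = 0`). -/
noncomputable def Gfun (χ : EuclideanSpace ℝ (Fin 2) → ℝ)
    (x : EuclideanSpace ℝ (Fin 2)) : ℝ :=
  -(2 * Real.pi)⁻¹ * Real.log ‖x‖ * χ x

/-- The mollifier `ρ_δ(x) = δ⁻² ρ(x/δ)`. -/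
noncomputable def mollify (ρ : EuclideanSpace ℝ (Fin 2) → ℝ) (δ : ℝ)
    (x : EuclideanSpace ℝ (Fin 2)) : ℝ :=
  δ⁻¹ ^ 2 * ρ (δ⁻¹ • x)

/-- The mollified Green function `G_δ = G * ρ_δ`. -/
noncomputable def Gmol (χ ρ : EuclideanSpace ℝ (Fin 2) → ℝ) (δ : ℝ)
    (x : EuclideanSpace ℝ (Fin 2)) : ℝ :=
  ∫ y, Gfun χ (x - y) * mollify ρ δ y



lemma aux_grad {f : EuclideanSpace ℝ (Fin 2) → ℝ} {x : EuclideanSpace ℝ (Fin 2)} {C : ℝ} (hC : 0 ≤ C)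
    (h : ∀ᶠ x' in nhds x, ‖f x' - f x‖ ≤ C * ‖x' - x‖) : ‖gradient f x‖ ≤ C := by
  unfold gradient
  rw [LinearIsometryEquiv.norm_map]
  exact norm_fderiv_le_of_lip' ℝ hC h

/-- Local Lipschitz bound from a two-point bound. -/
lemma aux_grad2 {f : EuclideanSpace ℝ (Fin 2) → ℝ} {x : EuclideanSpace ℝ (Fin 2)} (hx : x ≠ 0) {C : ℝ} (hC : 0 ≤ C)
    (h : ∀ x' : EuclideanSpace ℝ (Fin 2), x' ≠ 0 → |f x' - f x| ≤ C * ‖x' - x‖ * (‖x'‖⁻¹ + ‖x‖⁻¹)) :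
    ‖gradient f x‖ ≤ 3 * C / ‖x‖ := by
  have hx0 : 0 < ‖x‖ := norm_pos_iff.2 hx
  apply aux_grad (by positivity)
  have hc : ∀ᶠ x' in nhds x, ‖x‖ / 2 < ‖x'‖ :=
    continuous_norm.continuousAt.eventually (lt_mem_nhds (by linarith))
  filter_upwards [hc] with x' hx'
  have h0 : 0 < ‖x'‖ := by linarith
  have h1 := h x' (norm_pos_iff.1 h0)
  have h2 : ‖x'‖⁻¹ ≤ 2 * ‖x‖⁻¹ := by
    have := inv_anti₀ (by positivity) hx'.le
    rw [inv_div] at this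
    simpa [div_eq_mul_inv] using this
  rw [Real.norm_eq_abs]
  refine h1.trans ?_
  have h3 : ‖x'‖⁻¹ + ‖x‖⁻¹ ≤ 3 * ‖x‖⁻¹ := by linarith
  calc _ ≤ C * ‖x' - x‖ * (3 * ‖x‖⁻¹) := by gcongr
    _ = _ := by rw [div_eq_mul_inv]; ring

lemma aux_log {s t : ℝ} (hs : 0 < s) (hst : s ≤ t) :
    |Real.log s - Real.log t| ≤ (t - s) * s⁻¹ := by
  have ht : 0 < t := hs.trans_le hst
  rw [abs_sub_comm, abs_of_nonneg (sub_nonneg.2 (Real.log_le_log hs hst)),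
    ← Real.log_div ht.ne' hs.ne']
  have := Real.log_le_sub_one_of_pos (div_pos ht hs)
  refine this.trans (le_of_eq ?_)
  field_simp

lemma aux_log2 {s : ℝ} (hs : 0 < s) (h2 : s ≤ 2) : |Real.log s| ≤ 2 * s⁻¹ := by
  have h1 := Real.neg_inv_le_log hs.le
  have h3 := Real.log_le_sub_one_of_pos hs
  have h4 : 0 < s⁻¹ := inv_pos.2 hs
  rw [abs_le]
  refine ⟨by linarith, h3.trans ?_⟩
  rw [← div_eq_mul_inv, le_div_iff₀ hs]
  nlinarith

lemma aux_G_aux (χ : EuclideanSpace ℝ (Fin 2) → ℝ) (hχrange : ∀ x, χ x ∈ Set.Icc (0:ℝ) 1)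
    (hχzero : ∀ x, 2 ≤ ‖x‖ → χ x = 0) (L : ℝ) (hL0 : 0 ≤ L)
    (hL : ∀ a b, |χ a - χ b| ≤ L * ‖a - b‖) (a b : EuclideanSpace ℝ (Fin 2)) (ha : a ≠ 0) (hab : ‖a‖ ≤ ‖b‖) :
    |Real.log ‖a‖ * χ a - Real.log ‖b‖ * χ b| ≤ (1 + 2 * L) * ‖a - b‖ * ‖a‖⁻¹ := by
  have ha0 : 0 < ‖a‖ := norm_pos_iff.2 ha
  rcases le_total 2 ‖a‖ with h2 | h2
  · rw [hχzero a h2, hχzero b (h2.trans hab)]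
    simp only [mul_zero, sub_zero, abs_zero]
    positivity
  · have e : Real.log ‖a‖ * χ a - Real.log ‖b‖ * χ b =
        (Real.log ‖a‖ - Real.log ‖b‖) * χ b + Real.log ‖a‖ * (χ a - χ b) := by ring
    rw [e]
    refine (abs_add_le _ _).trans ?_
    rw [abs_mul, abs_mul]
    have h3 : |Real.log ‖a‖ - Real.log ‖b‖| ≤ ‖a - b‖ * ‖a‖⁻¹ := by
      refine (aux_log ha0 hab).trans ?_
      gcongr
      rw [norm_sub_rev]; exact norm_sub_norm_le b a
    have h4 : |χ b| ≤ 1 := by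
      rw [abs_of_nonneg (hχrange b).1]; exact (hχrange b).2
    have h5 := aux_log2 ha0 h2
    calc _ ≤ (‖a - b‖ * ‖a‖⁻¹) * 1 + (2 * ‖a‖⁻¹) * (L * ‖a - b‖) := by
          gcongr
          exact hL a b
      _ = _ := by ring

lemma aux_G (χ : EuclideanSpace ℝ (Fin 2) → ℝ) (hχrange : ∀ x, χ x ∈ Set.Icc (0:ℝ) 1)
    (hχzero : ∀ x, 2 ≤ ‖x‖ → χ x = 0) (L : ℝ) (hL0 : 0 ≤ L)
    (hL : ∀ a b, |χ a - χ b| ≤ L * ‖a - b‖) (a b : EuclideanSpace ℝ (Fin 2)) (ha : a ≠ 0) (hb : b ≠ 0) :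
    |Gfun χ a - Gfun χ b| ≤
      ((2 * Real.pi)⁻¹ * (1 + 2 * L)) * ‖a - b‖ * (‖a‖⁻¹ + ‖b‖⁻¹) := by
  have key : |Real.log ‖a‖ * χ a - Real.log ‖b‖ * χ b| ≤
      (1 + 2 * L) * ‖a - b‖ * (‖a‖⁻¹ + ‖b‖⁻¹) := by
    rcases le_total ‖a‖ ‖b‖ with h | h
    · refine (aux_G_aux χ hχrange hχzero L hL0 hL a b ha h).trans ?_
      gcongr
      simp
    · have := aux_G_aux χ hχrange hχzero L hL0 hL b a hb h
      rw [abs_sub_comm, norm_sub_rev] at this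
      refine this.trans ?_
      gcongr
      simp
  have hp : 0 < (2 * Real.pi)⁻¹ := by positivity
  have e : Gfun χ a - Gfun χ b =
      -(2 * Real.pi)⁻¹ * (Real.log ‖a‖ * χ a - Real.log ‖b‖ * χ b) := by
    unfold Gfun; ring
  rw [e, abs_mul, abs_neg, abs_of_pos hp]
  calc _ ≤ (2 * Real.pi)⁻¹ * ((1 + 2 * L) * ‖a - b‖ * (‖a‖⁻¹ + ‖b‖⁻¹)) := by gcongr
    _ = _ := by ring

lemma aux_Gsize (χ : EuclideanSpace ℝ (Fin 2) → ℝ) (hχrange : ∀ x, χ x ∈ Set.Icc (0:ℝ) 1)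
    (hχzero : ∀ x, 2 ≤ ‖x‖ → χ x = 0) (a : EuclideanSpace ℝ (Fin 2)) :
    |Gfun χ a| ≤ ((2 * Real.pi)⁻¹ * 2) * ‖a‖⁻¹ := by
  have hp : 0 < (2 * Real.pi)⁻¹ := by positivity
  rcases le_total 2 ‖a‖ with h2 | h2
  · unfold Gfun; rw [hχzero a h2]; simp only [mul_zero, abs_zero]; positivity
  by_cases ha : a = 0
  · subst ha; simp [Gfun]
  have h4 : |χ a| ≤ 1 := by
    rw [abs_of_nonneg (hχrange a).1]; exact (hχrange a).2
  have := aux_log2 (norm_pos_iff.2 ha) h2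
  unfold Gfun
  rw [abs_mul, abs_mul, abs_neg, abs_of_pos hp]
  calc _ ≤ (2 * Real.pi)⁻¹ * (2 * ‖a‖⁻¹) * 1 := by gcongr
    _ = _ := by ring

lemma aux_inv_int :
    Integrable (Set.indicator (Metric.ball (0 : EuclideanSpace ℝ (Fin 2)) 1) (fun z => ‖z‖⁻¹)) := by
  rw [integrable_indicator_iff measurableSet_ball]
  rw [integrableOn_fun_norm_addHaar volume (f := fun t : ℝ => t⁻¹)]
  have : IntegrableOn (fun _ : ℝ => (1 : ℝ)) (Set.Ioo 0 1) := by simp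
  refine this.congr_fun ?_ measurableSet_Ioo
  intro y hy
  simp [mul_inv_cancel₀ hy.1.ne']

/-- Potential estimate for the kernel `1/|z|`. -/
lemma aux_pot (ρ : EuclideanSpace ℝ (Fin 2) → ℝ) (hc : Continuous ρ) (hρi : Integrable ρ)
    (M : ℝ) (hM : ∀ w, |ρ w| ≤ M)
    (hρsupp : Function.support ρ ⊆ Metric.closedBall 0 1) :
    ∃ K : ℝ, 0 ≤ K ∧ ∀ u : EuclideanSpace ℝ (Fin 2), Integrable (fun w => |ρ w| * ‖u - w‖⁻¹) ∧
      ‖u‖ * ∫ w, |ρ w| * ‖u - w‖⁻¹ ≤ K := by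
  set k : EuclideanSpace ℝ (Fin 2) → ℝ := Set.indicator (Metric.ball (0 : EuclideanSpace ℝ (Fin 2)) 1) (fun z => ‖z‖⁻¹) with hk
  have hki : Integrable k := aux_inv_int
  have hM0 : 0 ≤ M := (abs_nonneg _).trans (hM 0)
  have hk0 : ∀ z, 0 ≤ k z := fun z => Set.indicator_nonneg (fun z _ => by positivity) z
  have hkb : ∀ z, ‖z‖⁻¹ ≤ 1 + k z := by
    intro z
    by_cases hz : z ∈ Metric.ball (0 : EuclideanSpace ℝ (Fin 2)) 1
    · rw [hk, Set.indicator_of_mem hz]; linarith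
    · have : 1 ≤ ‖z‖ := by simpa using hz
      have := inv_le_one_of_one_le₀ this
      linarith [hk0 z]
  have hra : Integrable (fun w => |ρ w|) := hρi.abs
  have hB : ∀ u : EuclideanSpace ℝ (Fin 2), Integrable (fun w => |ρ w| + M * k (u - w)) := fun u =>
    hra.add ((hki.comp_sub_left u).const_mul M)
  have hle : ∀ u w : EuclideanSpace ℝ (Fin 2), |ρ w| * ‖u - w‖⁻¹ ≤ |ρ w| + M * k (u - w) := by
    intro u w
    calc _ ≤ |ρ w| * (1 + k (u - w)) := by gcongr; exact hkb _
      _ = |ρ w| + |ρ w| * k (u - w) := by ring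
      _ ≤ _ := by
        have := mul_le_mul_of_nonneg_right (hM w) (hk0 (u - w))
        linarith
  have hI : ∀ u : EuclideanSpace ℝ (Fin 2), Integrable (fun w => |ρ w| * ‖u - w‖⁻¹) := by
    intro u
    refine (hB u).mono' ?_ ?_
    · have := hc.measurable
      exact Measurable.aestronglyMeasurable (by fun_prop)
    · filter_upwards with w
      rw [Real.norm_eq_abs, abs_of_nonneg (by positivity)]
      exact hle u w
  refine ⟨∫ w, |ρ w| + (|ρ w| + M * k (0 - w)), ?_, ?_⟩
  · exact integral_nonneg fun w => by have := hk0 (0 - w); positivity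
  intro u
  refine ⟨hI u, ?_⟩
  rw [← integral_const_mul]
  have e : ∫ w, |ρ w| + (|ρ w| + M * k (0 - w)) = ∫ w, |ρ w| + (|ρ w| + M * k (u - w)) := by
    have f : ∀ v : EuclideanSpace ℝ (Fin 2), ∫ w, |ρ w| + (|ρ w| + M * k (v - w)) =
        (∫ w, |ρ w|) + ((∫ w, |ρ w|) + M * ∫ w, k w) := by
      intro v
      rw [integral_add hra (hB v), integral_add hra ((hki.comp_sub_left v).const_mul M),
        integral_const_mul, integral_sub_left_eq_self k volume v]
    rw [f, f]
  rw [e]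
  refine integral_mono ((hI u).const_mul _) (hra.add (hB u)) fun w => ?_
  show ‖u‖ * (|ρ w| * ‖u - w‖⁻¹) ≤ |ρ w| + (|ρ w| + M * k (u - w))
  refine le_trans ?_ (add_le_add_right (hle u w) _)
  by_cases hw : ρ w = 0
  · simp [hw]
  have hw1 : ‖w‖ ≤ 1 := by simpa using hρsupp hw
  by_cases hz : u - w = 0
  · simp [hz]
  have hz0 : 0 < ‖u - w‖ := norm_pos_iff.2 hz
  have h1 : ‖u‖ ≤ ‖u - w‖ + 1 := by
    have := norm_add_le (u - w) w
    rw [sub_add_cancel] at this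
    linarith
  calc _ ≤ (‖u - w‖ + 1) * (|ρ w| * ‖u - w‖⁻¹) := by gcongr
    _ = _ := by field_simp

lemma aux_scale (χ ρ : EuclideanSpace ℝ (Fin 2) → ℝ) (δ : ℝ) (hδ : 0 < δ) (x : EuclideanSpace ℝ (Fin 2)) :
    Gmol χ ρ δ x = ∫ w, Gfun χ (x - δ • w) * ρ w := by
  have := Measure.integral_comp_smul (volume : Measure (EuclideanSpace ℝ (Fin 2)))
    (fun w => Gfun χ (x - δ • w) * ρ w) δ⁻¹
  simp only [smul_smul, mul_inv_cancel₀ hδ.ne', one_smul, finrank_euclideanSpace,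
    Fintype.card_fin, smul_eq_mul] at this
  unfold Gmol mollify
  have e : ∀ y, Gfun χ (x - y) * (δ⁻¹ ^ 2 * ρ (δ⁻¹ • y)) =
    δ⁻¹ ^ 2 * (Gfun χ (x - y) * ρ (δ⁻¹ • y)) := fun y => by ring
  simp_rw [e]
  rw [integral_const_mul, this, abs_of_pos (by positivity), ← mul_assoc,
    mul_inv_cancel₀ (by positivity), one_mul]

lemma aux_mol (χ ρ : EuclideanSpace ℝ (Fin 2) → ℝ) (hχc : Continuous χ) (hc : Continuous ρ)
    (hχrange : ∀ x, χ x ∈ Set.Icc (0:ℝ) 1)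
    (hχzero : ∀ x, 2 ≤ ‖x‖ → χ x = 0) (C K : ℝ) (hC : 0 ≤ C)
    (hG : ∀ a b : EuclideanSpace ℝ (Fin 2), a ≠ 0 → b ≠ 0 →
      |Gfun χ a - Gfun χ b| ≤ C * ‖a - b‖ * (‖a‖⁻¹ + ‖b‖⁻¹))
    (hK : ∀ u : EuclideanSpace ℝ (Fin 2), Integrable (fun w => |ρ w| * ‖u - w‖⁻¹) ∧
      ‖u‖ * ∫ w, |ρ w| * ‖u - w‖⁻¹ ≤ K) (δ : ℝ) (hδ : 0 < δ) (a b : EuclideanSpace ℝ (Fin 2))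
    (ha : a ≠ 0) (hb : b ≠ 0) :
    |Gmol χ ρ δ a - Gmol χ ρ δ b| ≤ (C * K) * ‖a - b‖ * (‖a‖⁻¹ + ‖b‖⁻¹) := by
  have hn : ∀ x w : EuclideanSpace ℝ (Fin 2), ‖x - δ • w‖⁻¹ = δ⁻¹ * ‖δ⁻¹ • x - w‖⁻¹ := by
    intro x w
    have : x - δ • w = δ • (δ⁻¹ • x - w) := by
      rw [smul_sub, smul_smul, mul_inv_cancel₀ hδ.ne', one_smul]
    rw [this, norm_smul, Real.norm_eq_abs, abs_of_pos hδ, mul_inv]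
  have hP : ∀ x : EuclideanSpace ℝ (Fin 2), Integrable (fun w => |ρ w| * ‖x - δ • w‖⁻¹) := by
    intro x
    refine ((hK (δ⁻¹ • x)).1.const_mul δ⁻¹).congr ?_
    filter_upwards with w
    rw [hn]; ring
  have hPK : ∀ x : EuclideanSpace ℝ (Fin 2), x ≠ 0 → ∫ w, |ρ w| * ‖x - δ • w‖⁻¹ ≤ K * ‖x‖⁻¹ := by
    intro x hx
    have hx0 : 0 < ‖x‖ := norm_pos_iff.2 hx
    have e : ∫ w, |ρ w| * ‖x - δ • w‖⁻¹ = δ⁻¹ * ∫ w, |ρ w| * ‖δ⁻¹ • x - w‖⁻¹ := by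
      rw [← integral_const_mul]
      congr 1; ext w; rw [hn]; ring
    have h := (hK (δ⁻¹ • x)).2
    rw [norm_smul, Real.norm_eq_abs, abs_of_pos (inv_pos.2 hδ)] at h
    rw [e, ← div_eq_mul_inv, le_div_iff₀ hx0]
    linarith
  have hI : ∀ x : EuclideanSpace ℝ (Fin 2), Integrable (fun w => Gfun χ (x - δ • w) * ρ w) := by
    intro x
    refine ((hP x).const_mul ((2 * Real.pi)⁻¹ * 2)).mono' ?_ ?_
    · have := hc.measurable
      have := hχc.measurable
      unfold Gfun
      exact Measurable.aestronglyMeasurable (by fun_prop)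
    · filter_upwards with w
      rw [Real.norm_eq_abs, abs_mul]
      calc _ ≤ ((2 * Real.pi)⁻¹ * 2) * ‖x - δ • w‖⁻¹ * |ρ w| := by
            gcongr; exact aux_Gsize χ hχrange hχzero _
        _ = _ := by ring
  rw [aux_scale χ ρ δ hδ, aux_scale χ ρ δ hδ, ← integral_sub (hI a) (hI b), ← Real.norm_eq_abs]
  have hne : ∀ x : EuclideanSpace ℝ (Fin 2), ∀ᵐ w : EuclideanSpace ℝ (Fin 2), x - δ • w ≠ 0 := by
    intro x
    filter_upwards [(Set.countable_singleton (δ⁻¹ • x)).ae_notMem volume] with w hw h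
    apply hw
    rw [sub_eq_zero] at h
    rw [Set.mem_singleton_iff, h, smul_smul, inv_mul_cancel₀ hδ.ne', one_smul]
  have hb1 : ‖∫ w, Gfun χ (a - δ • w) * ρ w - Gfun χ (b - δ • w) * ρ w‖ ≤
      ∫ w, (C * ‖a - b‖) * (|ρ w| * ‖a - δ • w‖⁻¹ + |ρ w| * ‖b - δ • w‖⁻¹) := by
    refine norm_integral_le_of_norm_le (((hP a).add (hP b)).const_mul _) ?_
    filter_upwards [hne a, hne b] with w h1 h2
    have := hG _ _ h1 h2
    rw [sub_sub_sub_cancel_right] at this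
    rw [← sub_mul, Real.norm_eq_abs, abs_mul]
    calc _ ≤ C * ‖a - b‖ * (‖a - δ • w‖⁻¹ + ‖b - δ • w‖⁻¹) * |ρ w| := by gcongr
      _ = _ := by ring
  refine hb1.trans ?_
  rw [integral_const_mul, integral_add (hP a) (hP b)]
  calc _ ≤ (C * ‖a - b‖) * (K * ‖a‖⁻¹ + K * ‖b‖⁻¹) := by
        gcongr
        · exact hPK a ha
        · exact hPK b hb
    _ = _ := by ring

theorem gradient_bound_green_function
    (χ : EuclideanSpace ℝ (Fin 2) → ℝ)
    (hχsmooth : ContDiff ℝ (⊤ : ℕ∞) χ)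
    (hχrange : ∀ x, χ x ∈ Set.Icc (0:ℝ) 1)
    (hχradial : ∀ x y, ‖x‖ = ‖y‖ → χ x = χ y)
    (hχone : ∀ x, ‖x‖ ≤ 1 → χ x = 1)
    (hχzero : ∀ x, 2 ≤ ‖x‖ → χ x = 0)
    (ρ : EuclideanSpace ℝ (Fin 2) → ℝ)
    (hρsmooth : ContDiff ℝ (⊤ : ℕ∞) ρ)
    (hρeven : ∀ x, ρ (-x) = ρ x)
    (hρsupp : Function.support ρ ⊆ Metric.closedBall 0 1)
    (hρint : ∫ x, ρ x = 1) :
    ∃ C > (0:ℝ), ∀ x : EuclideanSpace ℝ (Fin 2), x ≠ 0 → ∀ δ ∈ Set.Ioc (0:ℝ) 1,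
      ‖gradient (Gfun χ) x‖ ≤ C / ‖x‖ ∧ ‖gradient (Gmol χ ρ δ) x‖ ≤ C / ‖x‖ := by
  have hχcs : HasCompactSupport χ := by
    refine HasCompactSupport.of_support_subset_isCompact
      (isCompact_closedBall (0 : EuclideanSpace ℝ (Fin 2)) 2) ?_
    intro x hx
    by_contra h
    simp only [Metric.mem_closedBall, dist_zero_right, not_le] at h
    exact hx (hχzero x h.le)
  have hρcs : HasCompactSupport ρ :=
    HasCompactSupport.of_support_subset_isCompact (isCompact_closedBall _ _) hρsupp
  have hρc := hρsmooth.continuous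
  obtain ⟨L, hL⟩ := ContDiff.lipschitzWith_of_hasCompactSupport hχcs hχsmooth (by simp)
  obtain ⟨M, hM⟩ := hρcs.exists_bound_of_continuous hρc
  obtain ⟨K, hK0, hK⟩ := aux_pot ρ hρc (hρc.integrable_of_hasCompactSupport hρcs) M hM hρsupp
  have hG := aux_G χ hχrange hχzero L L.2 (fun a b => by
    have := hL.dist_le_mul a b
    rwa [Real.dist_eq, dist_eq_norm] at this)
  set C : ℝ := (2 * Real.pi)⁻¹ * (1 + 2 * (L : ℝ)) with hCdef
  have hC : 0 ≤ C := by positivity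
  refine ⟨3 * C + 3 * (C * K) + 1, by positivity, fun x hx δ hδ => ⟨?_, ?_⟩⟩
  · refine (aux_grad2 hx hC fun x' hx' => hG x' x hx' hx).trans ?_
    gcongr
    have : 0 ≤ C * K := by positivity
    linarith
  · refine (aux_grad2 hx (by positivity : 0 ≤ C * K) fun x' hx' =>
      aux_mol χ ρ hχsmooth.continuous hρc hχrange hχzero C K hC hG hK δ hδ.1 x' x hx' hx).trans ?_
    gcongr
    linarith
end

section
/- There exists a constant C > 0 such that for every x ∈ ℝ² with x ≠ 0, every δ ∈ (0,1] and every κ' ∈ (0,1): |∇(G - G_δ)(x)| ≤ C δ^{κ'} |x|^{-1-κ'}. -/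
open MeasureTheory

open Filter Topology


lemma aux_hasFDerivAt_log {x : (EuclideanSpace ℝ (Fin 2))} (hx : x ≠ 0) :
    HasFDerivAt (fun w : (EuclideanSpace ℝ (Fin 2)) => Real.log ‖w‖) (innerSL ℝ ((1 / ‖x‖) ^ 2 • x)) x := by
  have h1 : HasFDerivAt (fun w : (EuclideanSpace ℝ (Fin 2)) => ‖w‖ ^ 2) (2 • innerSL ℝ x) x :=
    (hasStrictFDerivAt_norm_sq x).hasFDerivAt
  have hn : ‖x‖ ≠ 0 := norm_ne_zero_iff.2 hx
  have h2 := (h1.log (by positivity)).const_mul (1 / 2 : ℝ)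
  have h3 : (fun w : (EuclideanSpace ℝ (Fin 2)) => Real.log ‖w‖) = fun w : (EuclideanSpace ℝ (Fin 2)) => (1 / 2 : ℝ) * Real.log (‖w‖ ^ 2) := by
    funext w
    rw [Real.log_pow]; push_cast; ring
  rw [h3]
  have h4 : innerSL ℝ ((1 / ‖x‖) ^ 2 • x)
      = (1 / 2 : ℝ) • (‖x‖ ^ 2)⁻¹ • (2 • innerSL ℝ x) := by
    ext v
    simp [inner_smul_left]
    try ring
  rw [h4]
  exact h2

lemma aux_norm_fderiv_log {x : (EuclideanSpace ℝ (Fin 2))} (hx : x ≠ 0) :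
    ‖innerSL ℝ ((1 / ‖x‖) ^ 2 • x)‖ = ‖x‖⁻¹ := by
  have hn : ‖x‖ ≠ 0 := norm_ne_zero_iff.2 hx
  rw [innerSL_apply_norm, norm_smul]
  simp
  field_simp

lemma aux_norm_fderiv_log_sub {x y : (EuclideanSpace ℝ (Fin 2))} (hx : x ≠ 0) (hy : y ≠ 0) :
    ‖innerSL ℝ ((1 / ‖x‖) ^ 2 • x) - innerSL ℝ ((1 / ‖y‖) ^ 2 • y)‖
      = ‖x - y‖ / (‖x‖ * ‖y‖) := by
  rw [← map_sub, innerSL_apply_norm, ← dist_eq_norm, dist_div_norm_sq_smul hx hy, dist_eq_norm]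
  ring

lemma aux_integrableOn_log (R : ℝ) :
    Integrable (fun x : (EuclideanSpace ℝ (Fin 2)) => (Metric.ball (0 : (EuclideanSpace ℝ (Fin 2))) R).indicator (fun x => Real.log ‖x‖) x) := by
  have := (integrable_fun_norm_addHaar (E := (EuclideanSpace ℝ (Fin 2))) volume
    (f := (Set.Iio R).indicator Real.log)).2 ?_
  · convert this using 2 with x
    simp [Set.indicator]
  · have : (fun y : ℝ => y ^ (Module.finrank ℝ (EuclideanSpace ℝ (Fin 2)) - 1) • (Set.Iio R).indicator Real.log y)
        = (Set.Iio R).indicator (fun y => y * Real.log y) := by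
      funext y
      simp [Set.indicator]
    rw [this]
    rw [integrableOn_indicator_iff measurableSet_Iio]
    refine IntegrableOn.mono_set (t := Set.Icc 0 R) ?_ ?_
    · exact Real.continuous_mul_log.continuousOn.integrableOn_compact isCompact_Icc
    · rintro y ⟨h1, h2⟩
      exact ⟨le_of_lt h2, le_of_lt h1⟩

lemma aux_locInt_log : LocallyIntegrable (fun x : (EuclideanSpace ℝ (Fin 2)) => Real.log ‖x‖) := by
  intro x
  refine ⟨Metric.ball 0 (‖x‖ + 1), Metric.isOpen_ball.mem_nhds (by simp), ?_⟩
  exact (integrable_indicator_iff measurableSet_ball).1 (aux_integrableOn_log _)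

lemma aux_hasCompactSupport {ρ : (EuclideanSpace ℝ (Fin 2)) → ℝ} (hρsupp : Function.support ρ ⊆ Metric.closedBall 0 1) :
    HasCompactSupport ρ :=
  HasCompactSupport.of_support_subset_isCompact (isCompact_closedBall 0 1) hρsupp

lemma aux_int_conv {f ρ : (EuclideanSpace ℝ (Fin 2)) → ℝ} (hf : LocallyIntegrable f) (hρ : Continuous ρ)
    (hc : HasCompactSupport ρ) (x : (EuclideanSpace ℝ (Fin 2))) :
    Integrable (fun u => f u * ρ (x - u)) :=
  hc.convolutionExists_right (ContinuousLinearMap.mul ℝ ℝ) hf hρ x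

lemma aux_int_conv' {f ρ : (EuclideanSpace ℝ (Fin 2)) → ℝ} (hf : LocallyIntegrable f) (hρ : Continuous ρ)
    (hc : HasCompactSupport ρ) (x : (EuclideanSpace ℝ (Fin 2))) :
    Integrable (fun u => f (x - u) * ρ u) := by
  have := (aux_int_conv hf hρ hc x).comp_sub_left x
  simpa using this

lemma aux_conv_swap (f ρ : (EuclideanSpace ℝ (Fin 2)) → ℝ) (x : (EuclideanSpace ℝ (Fin 2))) :
    ∫ u, f (x - u) * ρ u = ∫ u, f u * ρ (x - u) := by
  have := integral_sub_left_eq_self (fun u => f u * ρ (x - u)) volume x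
  simpa using this

/-- Generic averaging estimate. -/
lemma aux_avg {ρ : (EuclideanSpace ℝ (Fin 2)) → ℝ} (hρ : Integrable ρ)
    (hρsupp : Function.support ρ ⊆ Metric.closedBall 0 1) {f : (EuclideanSpace ℝ (Fin 2)) → ℝ} {K : ℝ}
    (hf : ∀ u, ‖u‖ ≤ 1 → |f u| ≤ K) : |∫ u, f u * ρ u| ≤ K * ∫ u, |ρ u| := by
  rw [← integral_const_mul]
  refine norm_integral_le_of_norm_le (f := fun u => f u * ρ u) (hρ.abs.const_mul K) (Eventually.of_forall fun u => ?_)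
  by_cases hu : ρ u = 0
  · simp [hu]
  · have : ‖u‖ ≤ 1 := by simpa using hρsupp hu
    rw [norm_mul, Real.norm_eq_abs, Real.norm_eq_abs]
    exact mul_le_mul_of_nonneg_right (hf u this) (abs_nonneg _)

lemma aux_log_lip {z w : (EuclideanSpace ℝ (Fin 2))} (hz : z ≠ 0) (hw : w ∈ Metric.ball z (‖z‖ / 4)) :
    |Real.log ‖w‖ - Real.log ‖z‖| ≤ 2 * ‖z‖⁻¹ * ‖w - z‖ := by
  have hzp : 0 < ‖z‖ := norm_pos_iff.2 hz
  have key : ∀ v ∈ Metric.ball z (‖z‖ / 4), ‖z‖ / 2 ≤ ‖v‖ := fun v hv => by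
    have h1 : ‖v - z‖ < ‖z‖ / 4 := by simpa [dist_eq_norm] using hv
    have := norm_sub_norm_le z v
    rw [norm_sub_rev] at this
    linarith
  have h0 : ∀ v ∈ Metric.ball z (‖z‖ / 4), v ≠ 0 := fun v hv h => by
    have := key v hv
    rw [h, norm_zero] at this; linarith
  have := Convex.norm_image_sub_le_of_norm_hasFDerivWithin_le
    (f := fun w : (EuclideanSpace ℝ (Fin 2)) => Real.log ‖w‖) (C := 2 * ‖z‖⁻¹)
    (fun v hv => (aux_hasFDerivAt_log (h0 v hv)).hasFDerivWithinAt)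
    (fun v hv => ?_) (convex_ball z (‖z‖ / 4)) (Metric.mem_ball_self (by positivity)) hw
  · simpa using this
  · rw [aux_norm_fderiv_log (h0 v hv)]
    have := inv_anti₀ (by positivity) (key v hv)
    calc _ ≤ _ := this
      _ = _ := by field_simp

lemma aux_log_second {z w y : (EuclideanSpace ℝ (Fin 2))} (hz : 2 ≤ ‖z‖) (hy : ‖y‖ ≤ 1)
    (hw : w ∈ Metric.ball z (‖z‖ / 4)) :
    |(Real.log ‖w‖ - Real.log ‖w - y‖) - (Real.log ‖z‖ - Real.log ‖z - y‖)|
      ≤ 8 * (‖z‖⁻¹) ^ 2 * ‖w - z‖ := by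
  have hzp : 0 < ‖z‖ := by linarith
  have key : ∀ v ∈ Metric.ball z (‖z‖ / 4), ‖z‖ / 2 ≤ ‖v‖ ∧ ‖z‖ / 4 ≤ ‖v - y‖ := fun v hv => by
    have h1 : ‖v - z‖ < ‖z‖ / 4 := by simpa [dist_eq_norm] using hv
    have := norm_sub_norm_le z v
    rw [norm_sub_rev] at this
    have := norm_sub_norm_le v y
    constructor <;> linarith
  have h0 : ∀ v ∈ Metric.ball z (‖z‖ / 4), v ≠ 0 := fun v hv h => by
    have := (key v hv).1
    rw [h, norm_zero] at this; linarith
  have h1 : ∀ v ∈ Metric.ball z (‖z‖ / 4), v - y ≠ 0 := fun v hv h => by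
    have := (key v hv).2
    rw [h, norm_zero] at this; linarith
  have hd : ∀ v ∈ Metric.ball z (‖z‖ / 4), HasFDerivAt
      (fun w : (EuclideanSpace ℝ (Fin 2)) => Real.log ‖w‖ - Real.log ‖w - y‖)
      (innerSL ℝ ((1 / ‖v‖) ^ 2 • v) - innerSL ℝ ((1 / ‖v - y‖) ^ 2 • (v - y))) v :=
    fun v hv => (aux_hasFDerivAt_log (h0 v hv)).fun_sub
      ((hasFDerivAt_comp_sub y).2 (aux_hasFDerivAt_log (h1 v hv)))
  have := Convex.norm_image_sub_le_of_norm_hasFDerivWithin_le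
    (f := fun w : (EuclideanSpace ℝ (Fin 2)) => Real.log ‖w‖ - Real.log ‖w - y‖) (C := 8 * (‖z‖⁻¹) ^ 2)
    (fun v hv => (hd v hv).hasFDerivWithinAt)
    (fun v hv => ?_) (convex_ball z (‖z‖ / 4)) (Metric.mem_ball_self (by positivity)) hw
  · simpa using this
  · rw [aux_norm_fderiv_log_sub (h0 v hv) (h1 v hv)]
    have e : v - (v - y) = y := by abel
    rw [e]
    obtain ⟨a, b⟩ := key v hv
    calc ‖y‖ / (‖v‖ * ‖v - y‖) ≤ 1 / ((‖z‖ / 2) * (‖z‖ / 4)) := by gcongr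
      _ = _ := by field_simp; norm_num

/-- The unit-scale estimate for the logarithm. -/
lemma aux_H {ρ : (EuclideanSpace ℝ (Fin 2)) → ℝ} (hρsmooth : ContDiff ℝ (⊤ : ℕ∞) ρ)
    (hρsupp : Function.support ρ ⊆ Metric.closedBall 0 1) (hρint : ∫ x, ρ x = 1) :
    ∃ C > (0 : ℝ), ∀ z : (EuclideanSpace ℝ (Fin 2)), z ≠ 0 → ∀ᶠ w in 𝓝 z,
      |(Real.log ‖w‖ - ∫ u, Real.log ‖w - u‖ * ρ u)
        - (Real.log ‖z‖ - ∫ u, Real.log ‖z - u‖ * ρ u)|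
        ≤ C * min (‖z‖⁻¹) ((‖z‖⁻¹) ^ 2) * ‖w - z‖ := by
  have hc := aux_hasCompactSupport hρsupp
  have hcont := hρsmooth.continuous
  have hI : Integrable ρ := hcont.integrable_of_hasCompactSupport hc
  obtain ⟨L, hL⟩ := hρsmooth.lipschitzWith_of_hasCompactSupport hc (by simp)
  set A := ∫ u, |ρ u| with hA
  have hA0 : 0 ≤ A := integral_nonneg fun _ => abs_nonneg _
  set B := ∫ u : (EuclideanSpace ℝ (Fin 2)), |(Metric.ball (0 : (EuclideanSpace ℝ (Fin 2))) 4).indicator (fun x => Real.log ‖x‖) u| with hB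
  have hB0 : 0 ≤ B := integral_nonneg fun _ => abs_nonneg _
  have hL0 : (0 : ℝ) ≤ L := L.2
  refine ⟨8 * A + 4 + 4 * (B * L), by positivity, fun z hz => ?_⟩
  have hzp : 0 < ‖z‖ := norm_pos_iff.2 hz
  filter_upwards [Metric.ball_mem_nhds z (show 0 < ‖z‖ / 4 by positivity)] with w hw
  have hwz : ‖w - z‖ < ‖z‖ / 4 := by simpa [dist_eq_norm] using hw
  rcases le_total 2 ‖z‖ with h2 | h2
  · have hmin : min (‖z‖⁻¹) ((‖z‖⁻¹) ^ 2) = (‖z‖⁻¹) ^ 2 := by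
      apply min_eq_right
      have h1 : ‖z‖⁻¹ ≤ 1 := inv_le_one_of_one_le₀ (by linarith)
      have h3 : 0 < ‖z‖⁻¹ := by positivity
      nlinarith
    have hrep : ∀ v : (EuclideanSpace ℝ (Fin 2)), Real.log ‖v‖ - ∫ u, Real.log ‖v - u‖ * ρ u
        = ∫ u, (Real.log ‖v‖ - Real.log ‖v - u‖) * ρ u := fun v => by
      simp_rw [sub_mul]
      rw [integral_sub (hI.const_mul _) (aux_int_conv' aux_locInt_log hcont hc v),
        integral_const_mul, hρint, mul_one]
    have hint : ∀ v : (EuclideanSpace ℝ (Fin 2)), Integrable fun u => (Real.log ‖v‖ - Real.log ‖v - u‖) * ρ u :=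
      fun v => by
        simp_rw [sub_mul]
        exact (hI.const_mul _).sub (aux_int_conv' aux_locInt_log hcont hc v)
    rw [hrep, hrep, ← integral_sub (hint w) (hint z), hmin]
    simp_rw [← sub_mul]
    refine (aux_avg hI hρsupp (fun u hu => aux_log_second h2 hu hw)).trans ?_
    have : 0 ≤ (4 + 4 * (B * L)) * (‖z‖⁻¹ ^ 2 * ‖w - z‖) := by positivity
    rw [← hA]
    nlinarith
  · have hmin : ‖z‖⁻¹ / 2 ≤ min (‖z‖⁻¹) ((‖z‖⁻¹) ^ 2) := by
      have h3 : 0 < ‖z‖⁻¹ := by positivity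
      apply le_min
      · linarith
      · have : (2 : ℝ)⁻¹ ≤ ‖z‖⁻¹ := inv_anti₀ hzp h2
        nlinarith
    have hP : |(∫ u, Real.log ‖w - u‖ * ρ u) - ∫ u, Real.log ‖z - u‖ * ρ u|
        ≤ B * L * ‖w - z‖ := by
      rw [aux_conv_swap (fun x => Real.log ‖x‖), aux_conv_swap (fun x => Real.log ‖x‖),
        ← integral_sub (aux_int_conv aux_locInt_log hcont hc w)
          (aux_int_conv aux_locInt_log hcont hc z), hB, mul_assoc, ← integral_mul_const]
      refine norm_integral_le_of_norm_le
        (f := fun u => Real.log ‖u‖ * ρ (w - u) - Real.log ‖u‖ * ρ (z - u)) ((aux_integrableOn_log 4).abs.mul_const _)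
        (Eventually.of_forall fun u => ?_)
      rw [← mul_sub, norm_mul, Real.norm_eq_abs]
      by_cases hu : u ∈ Metric.ball (0 : (EuclideanSpace ℝ (Fin 2))) 4
      · rw [Set.indicator_of_mem hu]
        refine mul_le_mul_of_nonneg_left ?_ (abs_nonneg _)
        have := hL.norm_sub_le (w - u) (z - u)
        simpa using this
      · have hu' : 4 ≤ ‖u‖ := by simpa using hu
        have hzero : ∀ v : (EuclideanSpace ℝ (Fin 2)), ‖v‖ < 3 → ρ (v - u) = 0 := fun v hv => by
          by_contra hne
          have h4 : ‖v - u‖ ≤ 1 := by simpa using hρsupp hne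
          have := norm_sub_norm_le u v
          rw [norm_sub_rev] at this
          linarith
        have hwn : ‖w‖ < 3 := by
          have := norm_sub_norm_le w z
          linarith
        rw [hzero w hwn, hzero z (by linarith)]
        simp
        positivity
    have hl := aux_log_lip hz hw
    have h5 : |(Real.log ‖w‖ - ∫ u, Real.log ‖w - u‖ * ρ u)
        - (Real.log ‖z‖ - ∫ u, Real.log ‖z - u‖ * ρ u)|
        ≤ 2 * ‖z‖⁻¹ * ‖w - z‖ + B * L * ‖w - z‖ := by
      rw [sub_sub_sub_comm]
      exact (abs_sub _ _).trans (add_le_add hl hP)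
    refine h5.trans ?_
    rw [← add_mul]
    refine mul_le_mul_of_nonneg_right ?_ (norm_nonneg _)
    have h6 : (8 * A + 4 + 4 * (B * L)) * (‖z‖⁻¹ / 2)
      ≤ (8 * A + 4 + 4 * (B * L)) * min (‖z‖⁻¹) ((‖z‖⁻¹) ^ 2) :=
      mul_le_mul_of_nonneg_left hmin (by positivity)
    refine le_trans ?_ h6
    have h7 : (2 : ℝ)⁻¹ ≤ ‖z‖⁻¹ := inv_anti₀ hzp h2
    have h8 : 0 ≤ A * ‖z‖⁻¹ := by positivity
    have h9 : 0 ≤ B * L := by positivity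
    nlinarith

lemma aux_F_contDiff {χ : (EuclideanSpace ℝ (Fin 2)) → ℝ} (hχsmooth : ContDiff ℝ (⊤ : ℕ∞) χ)
    (hχone : ∀ x, ‖x‖ ≤ 1 → χ x = 1) :
    ContDiff ℝ 2 (fun x : (EuclideanSpace ℝ (Fin 2)) => Real.log ‖x‖ * (χ x - 1)) := by
  rw [contDiff_iff_contDiffAt]
  intro x
  by_cases hx : ‖x‖ < 1
  · have : (fun x : (EuclideanSpace ℝ (Fin 2)) => Real.log ‖x‖ * (χ x - 1)) =ᶠ[𝓝 x] fun _ => 0 := by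
      filter_upwards [Metric.isOpen_ball.mem_nhds (show x ∈ Metric.ball (0 : (EuclideanSpace ℝ (Fin 2))) 1 by simpa)]
        with v hv
      rw [hχone v (by simpa using (le_of_lt (by simpa using hv : ‖v‖ < 1)))]
      simp
    exact contDiffAt_const.congr_of_eventuallyEq this
  · have hx0 : x ≠ 0 := by
      rintro rfl
      simp at hx
    refine ContDiffAt.mul ((contDiffAt_norm ℝ hx0).log (norm_ne_zero_iff.2 hx0)) ?_
    exact ((show ContDiff ℝ 2 χ from contDiff_infty.1 hχsmooth 2).sub contDiff_const).contDiffAt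

lemma aux_F_second {F : (EuclideanSpace ℝ (Fin 2)) → ℝ} (hF : ContDiff ℝ 2 F) :
    ∃ M ≥ (0 : ℝ), ∀ w z y : (EuclideanSpace ℝ (Fin 2)), w ∈ Metric.ball (0 : (EuclideanSpace ℝ (Fin 2))) 4 → z ∈ Metric.ball (0 : (EuclideanSpace ℝ (Fin 2))) 4 →
      ‖y‖ ≤ 1 → |(F w - F (w - y)) - (F z - F (z - y))| ≤ M * ‖y‖ * ‖w - z‖ := by
  have h1 : ContDiff ℝ 1 (fderiv ℝ F) := hF.fderiv_right (by norm_num)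
  obtain ⟨M, hM⟩ := (isCompact_closedBall (0 : (EuclideanSpace ℝ (Fin 2))) 5).exists_bound_of_continuousOn
    (h1.continuous_fderiv (by simp)).continuousOn
  have hM0 : 0 ≤ M := (norm_nonneg _).trans (hM 0 (by simp))
  have hlip : ∀ a b : (EuclideanSpace ℝ (Fin 2)), a ∈ Metric.closedBall (0 : (EuclideanSpace ℝ (Fin 2))) 5 → b ∈ Metric.closedBall (0 : (EuclideanSpace ℝ (Fin 2))) 5 →
      ‖fderiv ℝ F b - fderiv ℝ F a‖ ≤ M * ‖b - a‖ := fun a b ha hb =>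
    Convex.norm_image_sub_le_of_norm_fderiv_le
      (fun v _ => (h1.differentiable (by simp)) v) hM (convex_closedBall 0 5) ha hb
  have hd := hF.differentiable (by simp)
  refine ⟨M, hM0, fun w z y hw hz hy => ?_⟩
  have hd2 : ∀ v : (EuclideanSpace ℝ (Fin 2)), HasFDerivAt (fun w => F w - F (w - y))
      (fderiv ℝ F v - fderiv ℝ F (v - y)) v := fun v =>
    (hd v).hasFDerivAt.fun_sub ((hasFDerivAt_comp_sub y).2 (hd (v - y)).hasFDerivAt)
  have := Convex.norm_image_sub_le_of_norm_hasFDerivWithin_le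
    (f := fun w => F w - F (w - y)) (C := M * ‖y‖)
    (fun v _ => (hd2 v).hasFDerivWithinAt)
    (fun v hv => ?_) (convex_ball (0 : (EuclideanSpace ℝ (Fin 2))) 4) hz hw
  · simpa using this
  · have hv' : ‖v‖ < 4 := by simpa using hv
    have h3 := norm_sub_le v y
    have := hlip (v - y) v (by simp; linarith) (by simp; linarith)
    simpa using this

lemma aux_Gmol {χ ρ : (EuclideanSpace ℝ (Fin 2)) → ℝ} {δ : ℝ} (hδ : 0 < δ) (x : (EuclideanSpace ℝ (Fin 2))) :
    Gmol χ ρ δ x = ∫ u, Gfun χ (x - δ • u) * ρ u := by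
  have := Measure.integral_comp_smul (volume : Measure (EuclideanSpace ℝ (Fin 2)))
    (fun y => Gfun χ (x - y) * mollify ρ δ y) δ
  unfold Gmol
  have h2 : (∫ u : (EuclideanSpace ℝ (Fin 2)), Gfun χ (x - δ • u) * mollify ρ δ (δ • u))
      = δ⁻¹ ^ 2 * ∫ u, Gfun χ (x - δ • u) * ρ u := by
    rw [← integral_const_mul]
    congr 1
    funext u
    unfold mollify
    rw [inv_smul_smul₀ hδ.ne']
    ring
  rw [h2] at this
  have h3 : |(δ ^ Module.finrank ℝ (EuclideanSpace ℝ (Fin 2)))⁻¹| = δ⁻¹ ^ 2 := by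
    rw [abs_of_pos (by positivity)]
    simp
  rw [h3, smul_eq_mul] at this
  exact (mul_left_cancel₀ (by positivity) this).symm

lemma aux_log_scale {δ : ℝ} (hδ : 0 < δ) {x : (EuclideanSpace ℝ (Fin 2))} (hx : x ≠ 0) :
    Real.log ‖x‖ = Real.log δ + Real.log ‖δ⁻¹ • x‖ := by
  have : ‖x‖ ≠ 0 := norm_ne_zero_iff.2 hx
  rw [norm_smul, Real.norm_eq_abs, abs_of_pos (by positivity), Real.log_mul (by positivity) this,
    Real.log_inv]
  ring

lemma aux_repr {χ ρ : (EuclideanSpace ℝ (Fin 2)) → ℝ} (hF : ContDiff ℝ 2 (fun x : (EuclideanSpace ℝ (Fin 2)) => Real.log ‖x‖ * (χ x - 1)))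
    (hρ : Continuous ρ) (hc : HasCompactSupport ρ) (hρint : ∫ x, ρ x = 1)
    {δ : ℝ} (hδ : 0 < δ) {x : (EuclideanSpace ℝ (Fin 2))} (hx : x ≠ 0) :
    Gfun χ x - Gmol χ ρ δ x = -(2 * Real.pi)⁻¹ *
      ((Real.log ‖δ⁻¹ • x‖ - ∫ u, Real.log ‖δ⁻¹ • x - u‖ * ρ u)
        + ∫ u, (Real.log ‖x‖ * (χ x - 1) - Real.log ‖x - δ • u‖ * (χ (x - δ • u) - 1)) * ρ u) := by
  have hI : Integrable ρ := hρ.integrable_of_hasCompactSupport hc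
  set F : (EuclideanSpace ℝ (Fin 2)) → ℝ := fun x => Real.log ‖x‖ * (χ x - 1) with hFdef
  have hG : ∀ v, Gfun χ v = -(2 * Real.pi)⁻¹ * (Real.log ‖v‖ + F v) := fun v => by
    simp only [Gfun, hFdef]; ring
  have hFi : Integrable fun u => F (x - δ • u) * ρ u := by
    apply Continuous.integrable_of_hasCompactSupport
    · have := hF.continuous
      fun_prop
    · exact hc.mul_left
  have hLi := aux_int_conv' aux_locInt_log hρ hc (δ⁻¹ • x)
  have hmain : ∫ u, Gfun χ (x - δ • u) * ρ u
      = ∫ u, -(2 * Real.pi)⁻¹ * ((Real.log δ * ρ u + Real.log ‖δ⁻¹ • x - u‖ * ρ u)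
          + F (x - δ • u) * ρ u) := by
    apply integral_congr_ae
    filter_upwards [compl_mem_ae_iff.2 (measure_singleton (δ⁻¹ • x))] with u hu
    have hu' : x - δ • u ≠ 0 := by
      intro h
      apply hu
      rw [sub_eq_zero] at h
      simp [h, inv_smul_smul₀ hδ.ne']
    rw [hG, aux_log_scale hδ hu', smul_sub, inv_smul_smul₀ hδ.ne']
    ring
  have hFsplit : ∫ u, (F x - F (x - δ • u)) * ρ u = F x - ∫ u, F (x - δ • u) * ρ u := by
    simp_rw [sub_mul]
    rw [integral_sub (hI.const_mul _) hFi, integral_const_mul, hρint, mul_one]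
  have hgoal : (∫ u, (Real.log ‖x‖ * (χ x - 1)
      - Real.log ‖x - δ • u‖ * (χ (x - δ • u) - 1)) * ρ u)
      = F x - ∫ u, F (x - δ • u) * ρ u := hFsplit
  have hsum : Integrable fun u => Real.log δ * ρ u + Real.log ‖δ⁻¹ • x - u‖ * ρ u :=
    (hI.const_mul _).add hLi
  rw [hgoal, aux_Gmol hδ, hmain, integral_const_mul,
    integral_add hsum hFi, integral_add (hI.const_mul _) hLi,
    integral_const_mul, hρint, hG, aux_log_scale hδ hx]
  ring

lemma aux_pow {r δ κ : ℝ} (hr : 0 < r) (hδ : 0 < δ) (hδ1 : δ ≤ 1) (hκ : 0 < κ) (hκ1 : κ < 1) :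
    min ((δ⁻¹ * r)⁻¹) (((δ⁻¹ * r)⁻¹) ^ 2) * δ⁻¹ ≤ δ ^ κ * r ^ (-1 - κ) ∧
    (r ≤ 3 → δ ≤ 9 * (δ ^ κ * r ^ (-1 - κ))) := by
  have hrp : r ^ (-1 - κ) = r⁻¹ * (r ^ κ)⁻¹ := by
    rw [sub_eq_add_neg, Real.rpow_add hr, Real.rpow_neg_one, Real.rpow_neg hr.le]
  constructor
  · have ht : (δ⁻¹ * r)⁻¹ = δ / r := by field_simp
    rw [ht]
    set t := δ / r with htdef
    have ht0 : 0 < t := by positivity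
    have e : δ ^ κ * r ^ (-1 - κ) = t ^ κ * r⁻¹ := by
      rw [hrp, htdef, Real.div_rpow hδ.le hr.le]
      ring
    have e2 : r⁻¹ = t * δ⁻¹ := by rw [htdef]; field_simp
    rw [e, e2, ← mul_assoc]
    refine mul_le_mul_of_nonneg_right ?_ (by positivity)
    rcases le_total t 1 with h | h
    · have : t ≤ t ^ κ := by
        simpa using Real.rpow_le_rpow_of_exponent_ge ht0 h hκ1.le
      refine (min_le_right _ _).trans ?_
      nlinarith
    · have : 1 ≤ t ^ κ := Real.one_le_rpow h hκ.le
      refine (min_le_left _ _).trans ?_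
      nlinarith
  · intro h3
    have h1 : δ ≤ δ ^ κ := by
      simpa using Real.rpow_le_rpow_of_exponent_ge hδ hδ1 hκ1.le
    have h2 : r ^ κ ≤ 3 := by
      calc r ^ κ ≤ 3 ^ κ := Real.rpow_le_rpow hr.le h3 hκ.le
        _ ≤ 3 ^ (1 : ℝ) := Real.rpow_le_rpow_of_exponent_le (by norm_num) hκ1.le
        _ = 3 := by simp
    have h4 : (3 : ℝ)⁻¹ ≤ r⁻¹ := inv_anti₀ hr h3
    have h5 : (3 : ℝ)⁻¹ ≤ (r ^ κ)⁻¹ := inv_anti₀ (by positivity) h2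
    have h6 : (3 : ℝ)⁻¹ * 3⁻¹ ≤ r⁻¹ * (r ^ κ)⁻¹ :=
      mul_le_mul h4 h5 (by norm_num) (by positivity)
    rw [hrp]
    have h7 : δ ^ κ * ((3 : ℝ)⁻¹ * 3⁻¹) ≤ δ ^ κ * (r⁻¹ * (r ^ κ)⁻¹) :=
      mul_le_mul_of_nonneg_left h6 (by positivity)
    linarith

theorem gradient_difference_bound_green_function
    (χ : EuclideanSpace ℝ (Fin 2) → ℝ)
    (hχsmooth : ContDiff ℝ (⊤ : ℕ∞) χ)
    (hχrange : ∀ x, χ x ∈ Set.Icc (0:ℝ) 1)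
    (hχradial : ∀ x y, ‖x‖ = ‖y‖ → χ x = χ y)
    (hχone : ∀ x, ‖x‖ ≤ 1 → χ x = 1)
    (hχzero : ∀ x, 2 ≤ ‖x‖ → χ x = 0)
    (ρ : EuclideanSpace ℝ (Fin 2) → ℝ)
    (hρsmooth : ContDiff ℝ (⊤ : ℕ∞) ρ)
    (hρeven : ∀ x, ρ (-x) = ρ x)
    (hρsupp : Function.support ρ ⊆ Metric.closedBall 0 1)
    (hρint : ∫ x, ρ x = 1) :
    ∃ C > (0:ℝ), ∀ x : EuclideanSpace ℝ (Fin 2), x ≠ 0 → ∀ δ ∈ Set.Ioc (0:ℝ) 1,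
      ∀ κ' ∈ Set.Ioo (0:ℝ) 1,
      ‖gradient (fun y => Gfun χ y - Gmol χ ρ δ y) x‖
        ≤ C * δ ^ κ' * ‖x‖ ^ (-1 - κ') := by
  have hc := aux_hasCompactSupport hρsupp
  have hcont := hρsmooth.continuous
  have hI : Integrable ρ := hcont.integrable_of_hasCompactSupport hc
  have hF := aux_F_contDiff hχsmooth hχone
  obtain ⟨C, hC0, hC⟩ := aux_H hρsmooth hρsupp hρint
  obtain ⟨M, hM0, hM⟩ := aux_F_second hF
  set A := ∫ u, |ρ u| with hA
  have hA0 : 0 ≤ A := integral_nonneg fun _ => abs_nonneg _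
  set c : ℝ := |-(2 * Real.pi)⁻¹| with hcdef
  have hc0 : 0 ≤ c := abs_nonneg _
  refine ⟨1 + c * (C + 9 * (M * A)), by positivity, ?_⟩
  rintro x hx δ ⟨hδ, hδ1⟩ κ ⟨hκ, hκ1⟩
  have hxp : 0 < ‖x‖ := norm_pos_iff.2 hx
  have hgrad : ‖gradient (fun y => Gfun χ y - Gmol χ ρ δ y) x‖
      = ‖fderiv ℝ (fun y => Gfun χ y - Gmol χ ρ δ y) x‖ := by
    unfold gradient
    exact LinearIsometryEquiv.norm_map _ _
  rw [hgrad, mul_assoc]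
  set Q := δ ^ κ * ‖x‖ ^ (-1 - κ) with hQ
  have hQ0 : 0 ≤ Q := by positivity
  obtain ⟨hp1, hp2⟩ := aux_pow hxp hδ hδ1 hκ hκ1
  apply norm_fderiv_le_of_lip' ℝ (by positivity)
  rcases lt_or_ge 3 ‖x‖ with h3 | h3
  · have hzero : ∀ v : EuclideanSpace ℝ (Fin 2), 3 < ‖v‖ → Gfun χ v - Gmol χ ρ δ v = 0 := by
      intro v hv
      have hz : ∀ a : EuclideanSpace ℝ (Fin 2), 2 ≤ ‖a‖ → Gfun χ a = 0 := fun a ha => by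
        simp [Gfun, hχzero a ha]
      rw [aux_Gmol hδ, hz v (by linarith)]
      have : ∀ u, Gfun χ (v - δ • u) * ρ u = 0 := fun u => by
        by_cases hu : ρ u = 0
        · simp [hu]
        · have h1 : ‖u‖ ≤ 1 := by simpa using hρsupp hu
          rw [hz _ ?_, zero_mul]
          have h4 := norm_sub_norm_le v (δ • u)
          rw [norm_smul, Real.norm_eq_abs, abs_of_pos hδ] at h4
          nlinarith
      simp [this]
    filter_upwards [(isOpen_lt continuous_const continuous_norm).mem_nhds h3] with v hv
    rw [hzero v hv, hzero x h3]
    simp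
    positivity
  · have hcs : Tendsto (fun v : EuclideanSpace ℝ (Fin 2) => δ⁻¹ • v) (𝓝 x) (𝓝 (δ⁻¹ • x)) :=
      (continuous_const_smul δ⁻¹).tendsto x
    have hne : δ⁻¹ • x ≠ 0 := smul_ne_zero (by positivity) hx
    filter_upwards [hcs.eventually (hC _ hne), isOpen_ne.mem_nhds hx,
      Metric.isOpen_ball.mem_nhds (show x ∈ Metric.ball (0 : EuclideanSpace ℝ (Fin 2)) 4 by
        simp; linarith)] with w hw hw0 hw4
    rw [aux_repr hF hcont hc hρint hδ hw0, aux_repr hF hcont hc hρint hδ hx, ← mul_sub, norm_mul,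
      Real.norm_eq_abs, Real.norm_eq_abs, ← hcdef, add_sub_add_comm]
    have hx4 : x ∈ Metric.ball (0 : EuclideanSpace ℝ (Fin 2)) 4 := by
      simp; linarith
    set F : EuclideanSpace ℝ (Fin 2) → ℝ := fun x => Real.log ‖x‖ * (χ x - 1) with hFdef
    have hint : ∀ v : EuclideanSpace ℝ (Fin 2),
        Integrable fun u => (F v - F (v - δ • u)) * ρ u := fun v => by
      apply Continuous.integrable_of_hasCompactSupport
      · have := hF.continuous
        fun_prop
      · exact hc.mul_left
    have hb2 : |(∫ u, (F w - F (w - δ • u)) * ρ u) - ∫ u, (F x - F (x - δ • u)) * ρ u|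
        ≤ (M * δ * ‖w - x‖) * A := by
      rw [← integral_sub (hint w) (hint x)]
      simp_rw [← sub_mul]
      refine aux_avg hI hρsupp fun u hu => ?_
      have hn : ‖δ • u‖ ≤ δ := by
        rw [norm_smul, Real.norm_eq_abs, abs_of_pos hδ]
        nlinarith
      refine (hM w x (δ • u) hw4 hx4 (hn.trans hδ1)).trans ?_
      gcongr
    have hn1 : ‖δ⁻¹ • x‖ = δ⁻¹ * ‖x‖ := by
      rw [norm_smul, Real.norm_eq_abs, abs_of_pos (by positivity)]
    have hn2 : ‖δ⁻¹ • w - δ⁻¹ • x‖ = δ⁻¹ * ‖w - x‖ := by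
      rw [← smul_sub, norm_smul, Real.norm_eq_abs, abs_of_pos (by positivity)]
    rw [hn1, hn2] at hw
    have hb1 := hw.trans (show _ ≤ C * Q * ‖w - x‖ by
      calc _ = C * (min ((δ⁻¹ * ‖x‖)⁻¹) (((δ⁻¹ * ‖x‖)⁻¹) ^ 2) * δ⁻¹) * ‖w - x‖ := by ring
        _ ≤ _ := by gcongr)
    have hb3 : (M * δ * ‖w - x‖) * A ≤ 9 * (M * A) * Q * ‖w - x‖ := by
      have := hp2 h3
      calc _ ≤ (M * (9 * Q) * ‖w - x‖) * A := by gcongr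
        _ = _ := by ring
    have hfin := (abs_add_le _ _).trans (add_le_add hb1 (hb2.trans hb3))
    rw [hn1.symm] at hfin
    calc _ ≤ c * (C * Q * ‖w - x‖ + 9 * (M * A) * Q * ‖w - x‖) := by
          refine mul_le_mul_of_nonneg_left ?_ hc0
          rw [hn1] at hfin ⊢
          exact hfin
      _ ≤ _ := by
          have : 0 ≤ Q * ‖w - x‖ := by positivity
          nlinarith
end

section
/- There exist δ* ∈ (0,1/2] and constants 0 < c₁ < c₂ such that for all δ₁, δ₂ ∈ [0, δ*] with max(δ₁,δ₂) > 0, the function x ↦ ∇G_{δ₁}(x)·∇G_{δ₂}(x) is integrable on ℝ² and the quantity v(δ₁,δ₂) := ∫_{ℝ²} ∇G_{δ₁}(x)·∇G_{δ₂}(x) dx satisfies c₁ log(1/max(δ₁,δ₂)) ≤ v(δ₁,δ₂) ≤ c₂ log(1/max(δ₁,δ₂)). -/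
open MeasureTheory
open scoped RealInnerProductSpace

/-- The mollified Green function `G_δ = G * ρ_δ` for `δ > 0`, with `G₀ = G`. -/
noncomputable def Gd (χ ρ : EuclideanSpace ℝ (Fin 2) → ℝ) (δ : ℝ)
    (x : EuclideanSpace ℝ (Fin 2)) : ℝ :=
  if δ = 0 then Gfun χ x else ∫ y, Gfun χ (x - y) * mollify ρ δ y


open Filter Topology

abbrev E2 := EuclideanSpace ℝ (Fin 2)

noncomputable def Lf (x : E2) : ℝ := -(2 * Real.pi)⁻¹ * Real.log ‖x‖

noncomputable def K0 (x : E2) : E2 := (-(2 * Real.pi)⁻¹ * (‖x‖ ^ 2)⁻¹) • x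

lemma norm_gradient_eq (f : E2 → ℝ) (x : E2) : ‖gradient f x‖ = ‖fderiv ℝ f x‖ := by
  simp [gradient]

lemma two_pi_inv_le : (2 * Real.pi)⁻¹ ≤ 1 := by
  apply inv_le_one_of_one_le₀
  nlinarith [Real.pi_gt_three]

lemma two_pi_inv_pos : 0 < (2 * Real.pi)⁻¹ := by positivity

lemma hasGradientAt_Lf (x : E2) (hx : x ≠ 0) : HasGradientAt Lf (K0 x) x := by
  have hn : ‖x‖ ^ 2 ≠ 0 := by positivity
  have h1 : HasFDerivAt (fun y : E2 => ‖y‖ ^ 2) (2 • innerSL ℝ x) x :=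
    (hasStrictFDerivAt_norm_sq x).hasFDerivAt
  have h2 := (h1.log hn).const_mul (-(2 * Real.pi)⁻¹ * (1 / 2))
  rw [hasGradientAt_iff_hasFDerivAt]
  have : Lf = fun y : E2 => (-(2 * Real.pi)⁻¹ * (1 / 2)) * Real.log (‖y‖ ^ 2) := by
    funext y
    simp only [Lf, Real.log_pow]
    push_cast
    ring
  rw [this]
  refine h2.congr_fderiv ?_
  apply ContinuousLinearMap.ext
  intro y
  simp only [K0, InnerProductSpace.toDual_apply_apply, inner_smul_left, smul_apply,
    innerSL_apply_apply, smul_eq_mul, nsmul_eq_mul]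
  simp
  ring

lemma norm_K0 (x : E2) (hx : x ≠ 0) : ‖K0 x‖ = (2 * Real.pi)⁻¹ * ‖x‖⁻¹ := by
  have : ‖x‖ ≠ 0 := by positivity
  rw [K0, norm_smul, norm_mul, norm_neg, norm_inv, norm_inv, norm_pow, norm_norm,
    Real.norm_of_nonneg (by positivity : (0:ℝ) ≤ 2 * Real.pi)]
  field_simp

lemma norm_K0_le (x : E2) (hx : x ≠ 0) : ‖K0 x‖ ≤ ‖x‖⁻¹ := by
  rw [norm_K0 x hx]
  have := two_pi_inv_le
  have h : 0 ≤ ‖x‖⁻¹ := by positivity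
  nlinarith

lemma norm_K0_sub (a b : E2) (ha : a ≠ 0) (hb : b ≠ 0) :
    ‖K0 a - K0 b‖ ≤ ‖a - b‖ / (‖a‖ * ‖b‖) := by
  have h := dist_div_norm_sq_smul ha hb 1
  have e : K0 a - K0 b =
      (-(2 * Real.pi)⁻¹) • ((1 / ‖a‖) ^ 2 • a - (1 / ‖b‖) ^ 2 • b) := by
    simp only [K0, smul_sub, smul_smul, one_div, inv_pow]
  rw [e, norm_smul, ← dist_eq_norm, h, norm_neg, dist_eq_norm, Real.norm_of_nonneg two_pi_inv_pos.le]
  have h2 := two_pi_inv_le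
  have : 0 ≤ ‖a - b‖ / (‖a‖ * ‖b‖) := by positivity
  calc _ ≤ 1 * (1 ^ 2 / (‖a‖ * ‖b‖) * ‖a - b‖) := by gcongr
    _ = _ := by ring

lemma K0_smul (c : ℝ) (hc : c ≠ 0) (x : E2) : K0 (c • x) = c⁻¹ • K0 x := by
  simp only [K0, norm_smul, smul_smul, mul_pow, Real.norm_eq_abs, sq_abs]
  congr 1
  by_cases hx : ‖x‖ = 0
  · simp [hx]
  · field_simp

lemma locInt_Lf : LocallyIntegrable Lf (volume : Measure E2) := by
  intro x
  refine ⟨Metric.ball 0 (‖x‖ + 1), Metric.isOpen_ball.mem_nhds (by simp), ?_⟩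
  have := (integrableOn_fun_norm_addHaar (volume : Measure E2)
    (f := fun r => -(2 * Real.pi)⁻¹ * Real.log r) (r := ‖x‖ + 1)).2 ?_
  · exact this
  · have hc : Continuous fun y : ℝ => -(2 * Real.pi)⁻¹ * (y * Real.log y) :=
      Real.continuous_mul_log.const_mul _
    have h2 : IntegrableOn (fun y : ℝ => -(2 * Real.pi)⁻¹ * (y * Real.log y))
        (Set.Ioo 0 (‖x‖ + 1)) :=
      (hc.integrableOn_Icc).mono_set Set.Ioo_subset_Icc_self
    refine h2.congr_fun ?_ measurableSet_Ioo
    intro y _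
    simp
    ring

noncomputable def Hf (ρ : E2 → ℝ) (u : E2) : ℝ := ∫ z, Lf (u - z) * ρ z

lemma hcs_of (ρ : E2 → ℝ) (hρsupp : Function.support ρ ⊆ Metric.closedBall 0 1) :
    HasCompactSupport ρ :=
  HasCompactSupport.of_support_subset_isCompact (isCompact_closedBall 0 1) hρsupp

lemma Hf_contDiff (ρ : E2 → ℝ) (hρsmooth : ContDiff ℝ (⊤ : ℕ∞) ρ)
    (hρsupp : Function.support ρ ⊆ Metric.closedBall 0 1) : ContDiff ℝ 1 (Hf ρ) := by
  have h := (hcs_of ρ hρsupp).contDiff_convolution_right (n := 1) (ContinuousLinearMap.mul ℝ ℝ)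
    locInt_Lf (hρsmooth.of_le (by exact_mod_cast le_top))
  have e : Hf ρ = convolution Lf ρ (ContinuousLinearMap.mul ℝ ℝ) volume := by
    funext u
    rw [convolution_mul_swap]
    rfl
  rw [e]
  exact_mod_cast h

lemma Hf_integrable (ρ : E2 → ℝ) (hρsmooth : ContDiff ℝ (⊤ : ℕ∞) ρ)
    (hρsupp : Function.support ρ ⊆ Metric.closedBall 0 1) (u : E2) :
    Integrable fun z => Lf (u - z) * ρ z := by
  have h := (hcs_of ρ hρsupp).convolutionExists_right (ContinuousLinearMap.mul ℝ ℝ)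
    locInt_Lf hρsmooth.continuous u
  have h2 := h.integrable_swap
  exact h2

lemma Hf_far (ρ : E2 → ℝ) (hρsmooth : ContDiff ℝ (⊤ : ℕ∞) ρ)
    (hρsupp : Function.support ρ ⊆ Metric.closedBall 0 1)
    (hρint : ∫ x, ρ x = 1) (u : E2) (hu : 4 < ‖u‖) :
    ‖gradient (Hf ρ) u - K0 u‖ ≤ (4 * ∫ z, |ρ z|) / ‖u‖ ^ 2 := by
  have hu0 : u ≠ 0 := by
    rintro rfl
    norm_num at hu
  have hρi : Integrable ρ := hρsmooth.continuous.integrable_of_hasCompactSupport (hcs_of ρ hρsupp)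
  have hHd : DifferentiableAt ℝ (Hf ρ) u :=
    (Hf_contDiff ρ hρsmooth hρsupp).differentiable (by norm_num) u
  have hg := hHd.hasGradientAt
  have hL := hasGradientAt_Lf u hu0
  rw [hasGradientAt_iff_hasFDerivAt] at hg hL
  have hsub := hg.sub hL
  rw [← map_sub, ← hasGradientAt_iff_hasFDerivAt] at hsub
  rw [← hsub.gradient, norm_gradient_eq]
  apply norm_fderiv_le_of_lip' ℝ (by positivity)
  filter_upwards [Metric.ball_mem_nhds u (zero_lt_one)] with w hw
  have hHL : ∀ w, (Hf ρ - Lf) w = ∫ z, (Lf (w - z) - Lf w) * ρ z := by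
    intro w
    simp only [Pi.sub_apply, sub_mul]
    rw [integral_sub (Hf_integrable ρ hρsmooth hρsupp w) (hρi.const_mul _), integral_const_mul,
      hρint, mul_one]
    rfl
  have hint : ∀ w, Integrable fun z => (Lf (w - z) - Lf w) * ρ z := by
    intro w
    simp only [sub_mul]
    exact (Hf_integrable ρ hρsmooth hρsupp w).sub (hρi.const_mul _)
  rw [hHL, hHL, ← integral_sub (hint w) (hint u)]
  have key : ∀ z, ‖(Lf (w - z) - Lf w) * ρ z - (Lf (u - z) - Lf u) * ρ z‖ ≤
      (4 / ‖u‖ ^ 2 * ‖w - u‖) * |ρ z| := by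
    intro z
    by_cases hz : ρ z = 0
    · simp [hz]
    have hz1 : ‖z‖ ≤ 1 := by simpa using hρsupp hz
    rw [← sub_mul, norm_mul, Real.norm_eq_abs (ρ z)]
    gcongr
    have hball : ∀ x ∈ Metric.ball u 1, ‖u‖ / 2 ≤ ‖x‖ ∧ ‖u‖ / 2 ≤ ‖x - z‖ := by
      intro x hx
      rw [mem_ball_iff_norm'] at hx
      have h1 : ‖u‖ ≤ ‖u - x‖ + ‖x‖ := by simpa using norm_add_le (u - x) x
      have h2 : ‖x‖ ≤ ‖x - z‖ + ‖z‖ := by simpa using norm_add_le (x - z) z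
      constructor <;> linarith
    have hne : ∀ x ∈ Metric.ball u 1, x ≠ 0 ∧ x - z ≠ 0 := by
      intro x hx
      obtain ⟨h1, h2⟩ := hball x hx
      exact ⟨norm_pos_iff.1 (by linarith), norm_pos_iff.1 (by linarith)⟩
    have hder : ∀ x ∈ Metric.ball u 1, HasFDerivWithinAt (fun x => Lf (x - z) - Lf x)
        (InnerProductSpace.toDual ℝ E2 (K0 (x - z) - K0 x)) (Metric.ball u 1) x := by
      intro x hx
      have a1 := hasGradientAt_Lf _ (hne x hx).1
      have a2 := hasGradientAt_Lf _ (hne x hx).2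
      rw [hasGradientAt_iff_hasFDerivAt] at a1 a2
      rw [map_sub]
      have a3 := a2.comp x ((hasFDerivAt_id x).sub_const z)
      exact (a3.sub a1).hasFDerivWithinAt
    refine (convex_ball u 1).norm_image_sub_le_of_norm_hasFDerivWithin_le (𝕜 := ℝ) hder ?_
      (Metric.mem_ball_self zero_lt_one) hw
    intro x hx
    rw [LinearIsometryEquiv.norm_map]
    refine (norm_K0_sub _ _ (hne x hx).2 (hne x hx).1).trans ?_
    obtain ⟨h1, h2⟩ := hball x hx
    have : ‖x - z - x‖ ≤ 1 := by simpa using hz1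
    calc _ ≤ 1 / (‖u‖ / 2 * (‖u‖ / 2)) := by gcongr
      _ = _ := by field_simp; norm_num
  calc _ ≤ ∫ z, (4 / ‖u‖ ^ 2 * ‖w - u‖) * |ρ z| :=
        norm_integral_le_of_norm_le (hρi.abs.const_mul _) (Eventually.of_forall key)
    _ = _ := by
      rw [integral_const_mul]
      ring

lemma Hf_bounds (ρ : E2 → ℝ) (hρsmooth : ContDiff ℝ (⊤ : ℕ∞) ρ)
    (hρsupp : Function.support ρ ⊆ Metric.closedBall 0 1)
    (hρint : ∫ x, ρ x = 1) : ∃ C : ℝ, 1 ≤ C ∧ ∀ u : E2, u ≠ 0 →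
      ‖gradient (Hf ρ) u‖ ≤ C ∧ ‖gradient (Hf ρ) u‖ * ‖u‖ ≤ C ∧
      ‖gradient (Hf ρ) u - K0 u‖ * ‖u‖ ^ 2 ≤ C := by
  have hcont : Continuous fun u => ‖gradient (Hf ρ) u‖ := by
    simp only [norm_gradient_eq]
    exact ((Hf_contDiff ρ hρsmooth hρsupp).continuous_fderiv (by norm_num)).norm
  obtain ⟨C0, hC0⟩ := (isCompact_closedBall (0 : E2) 4).exists_bound_of_continuousOn
    hcont.continuousOn
  have hC0' : 0 ≤ C0 := (norm_nonneg _).trans (hC0 0 (by simp))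
  set C1 := 4 * ∫ z, |ρ z| with hC1
  have hC1' : 0 ≤ C1 := by positivity
  refine ⟨16 * C0 + C1 + 4, by linarith, fun u hu => ?_⟩
  have hup : 0 < ‖u‖ := by positivity
  have hK := norm_K0_le u hu
  have hKu : ‖K0 u‖ * ‖u‖ ≤ 1 := by
    calc _ ≤ ‖u‖⁻¹ * ‖u‖ := by gcongr
      _ = 1 := by field_simp
  have hg0 := norm_nonneg (gradient (Hf ρ) u)
  have hk0 := norm_nonneg (K0 u)
  rcases le_or_gt ‖u‖ 4 with h | h
  · have hb := hC0 u (by simpa using h)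
    rw [norm_norm] at hb
    refine ⟨by linarith, by nlinarith, ?_⟩
    have h3 := norm_sub_le (gradient (Hf ρ) u) (K0 u)
    calc _ ≤ (‖gradient (Hf ρ) u‖ + ‖K0 u‖) * ‖u‖ ^ 2 := by gcongr
      _ = ‖gradient (Hf ρ) u‖ * ‖u‖ ^ 2 + (‖K0 u‖ * ‖u‖) * ‖u‖ := by ring
      _ ≤ C0 * 4 ^ 2 + 1 * 4 := by gcongr
      _ ≤ _ := by linarith
  · have hb := Hf_far ρ hρsmooth hρsupp hρint u h
    rw [le_div_iff₀ (by positivity)] at hb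
    have h3 : ‖gradient (Hf ρ) u‖ ≤ ‖gradient (Hf ρ) u - K0 u‖ + ‖K0 u‖ := by
      simpa using norm_add_le (gradient (Hf ρ) u - K0 u) (K0 u)
    have h4 : ‖gradient (Hf ρ) u‖ * ‖u‖ ≤ C1 + 1 := by
      have : ‖gradient (Hf ρ) u - K0 u‖ * ‖u‖ ≤ C1 := by
        refine le_trans ?_ hb
        have := norm_nonneg (gradient (Hf ρ) u - K0 u)
        gcongr
        nlinarith
      nlinarith
    refine ⟨by nlinarith, by linarith, by linarith⟩

lemma Gd_eq (χ ρ : E2 → ℝ) (δ : ℝ) (hδ : 0 < δ) (x : E2) :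
    Gd χ ρ δ x = ∫ z, Gfun χ (x - δ • z) * ρ z := by
  have h := Measure.integral_comp_inv_smul_of_nonneg (volume : Measure E2)
    (fun z : E2 => Gfun χ (x - δ • z) * ρ z) hδ.le
  simp only [smul_inv_smul₀ hδ.ne', finrank_euclideanSpace, Fintype.card_fin, smul_eq_mul] at h
  rw [Gd, if_neg hδ.ne']
  have e : ∀ y, Gfun χ (x - y) * mollify ρ δ y = δ⁻¹ ^ 2 * (Gfun χ (x - y) * ρ (δ⁻¹ • y)) := by
    intro y
    rw [mollify]
    ring
  simp only [e]
  rw [integral_const_mul, h]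
  field_simp

lemma Gd_inner_eq (χ : E2 → ℝ) (hχone : ∀ x, ‖x‖ ≤ 1 → χ x = 1)
    (ρ : E2 → ℝ) (hρsmooth : ContDiff ℝ (⊤ : ℕ∞) ρ)
    (hρsupp : Function.support ρ ⊆ Metric.closedBall 0 1)
    (hρint : ∫ x, ρ x = 1) (δ : ℝ) (hδ : 0 < δ) (hδ1 : δ ≤ 1 / 8) (x : E2) (hx : ‖x‖ < 1 / 2) :
    Gd χ ρ δ x = -(2 * Real.pi)⁻¹ * Real.log δ + Hf ρ (δ⁻¹ • x) := by
  have hρi : Integrable ρ := hρsmooth.continuous.integrable_of_hasCompactSupport (hcs_of ρ hρsupp)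
  rw [Gd_eq χ ρ δ hδ]
  have hae : ∀ᵐ z : E2, Gfun χ (x - δ • z) * ρ z =
      -(2 * Real.pi)⁻¹ * Real.log δ * ρ z + Lf (δ⁻¹ • x - z) * ρ z := by
    have hne : ∀ᵐ z : E2, z ≠ δ⁻¹ • x := by
      simp [ae_iff]
    filter_upwards [hne] with z hz
    by_cases hz0 : ρ z = 0
    · simp [hz0]
    have hz1 : ‖z‖ ≤ 1 := by simpa using hρsupp hz0
    have e : x - δ • z = δ • (δ⁻¹ • x - z) := by
      rw [smul_sub, smul_inv_smul₀ hδ.ne']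
    have h1 : ‖x - δ • z‖ ≤ 1 := by
      refine (norm_sub_le _ _).trans ?_
      rw [norm_smul, Real.norm_of_nonneg hδ.le]
      nlinarith
    rw [Gfun, hχone _ h1, e, norm_smul, Real.norm_of_nonneg hδ.le, Real.log_mul hδ.ne', Lf]
    · ring
    · rw [norm_ne_zero_iff, sub_ne_zero]
      exact hz.symm
  rw [integral_congr_ae hae, integral_add (hρi.const_mul _) (Hf_integrable ρ hρsmooth hρsupp _),
    integral_const_mul, hρint, mul_one]
  rfl

lemma inner_bounds (χ : E2 → ℝ) (hχone : ∀ x, ‖x‖ ≤ 1 → χ x = 1)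
    (ρ : E2 → ℝ) (hρsmooth : ContDiff ℝ (⊤ : ℕ∞) ρ)
    (hρsupp : Function.support ρ ⊆ Metric.closedBall 0 1)
    (hρint : ∫ x, ρ x = 1) : ∃ C : ℝ, 1 ≤ C ∧ ∀ δ ∈ Set.Icc (0:ℝ) (1 / 8), ∀ x : E2, x ≠ 0 →
      ‖x‖ < 1 / 2 → ‖gradient (Gd χ ρ δ) x‖ * ‖x‖ ≤ C ∧ ‖gradient (Gd χ ρ δ) x‖ * δ ≤ C ∧
        ‖gradient (Gd χ ρ δ) x - K0 x‖ * ‖x‖ ^ 2 ≤ C * δ := by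
  obtain ⟨C, hC1, hC⟩ := Hf_bounds ρ hρsmooth hρsupp hρint
  refine ⟨C, hC1, fun δ hδ x hx hx2 => ?_⟩
  have hxp : 0 < ‖x‖ := by positivity
  rcases hδ.1.eq_or_lt with h0 | hpos
  · subst h0
    have hev : Gd χ ρ 0 =ᶠ[𝓝 x] Lf := by
      have : ∀ᶠ y in 𝓝 x, ‖y‖ < 1 / 2 := continuous_norm.continuousAt.eventually_lt
        continuousAt_const hx2
      filter_upwards [this] with y hy
      simp [Gd, Gfun, Lf, hχone y (by linarith)]
    rw [hev.gradient_eq, (hasGradientAt_Lf x hx).gradient]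
    refine ⟨?_, by simp; linarith, by simp⟩
    calc _ ≤ ‖x‖⁻¹ * ‖x‖ := by gcongr; exact norm_K0_le x hx
      _ = 1 := by field_simp
      _ ≤ C := hC1
  · have hev : Gd χ ρ δ =ᶠ[𝓝 x]
        fun y => -(2 * Real.pi)⁻¹ * Real.log δ + Hf ρ (δ⁻¹ • y) := by
      have : ∀ᶠ y in 𝓝 x, ‖y‖ < 1 / 2 := continuous_norm.continuousAt.eventually_lt
        continuousAt_const hx2
      filter_upwards [this] with y hy
      exact Gd_inner_eq χ hχone ρ hρsmooth hρsupp hρint δ hpos hδ.2 y hy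
    have hu : δ⁻¹ • x ≠ 0 := smul_ne_zero (inv_ne_zero hpos.ne') hx
    have hgr : gradient (Gd χ ρ δ) x = δ⁻¹ • gradient (Hf ρ) (δ⁻¹ • x) := by
      rw [hev.gradient_eq]
      apply HasGradientAt.gradient
      rw [hasGradientAt_iff_hasFDerivAt]
      have hHd : DifferentiableAt ℝ (Hf ρ) (δ⁻¹ • x) :=
        (Hf_contDiff ρ hρsmooth hρsupp).differentiable (by norm_num) _
      have hg := hHd.hasGradientAt
      rw [hasGradientAt_iff_hasFDerivAt] at hg
      have h2 := (hg.comp x ((hasFDerivAt_id x).const_smul δ⁻¹)).const_add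
        (-(2 * Real.pi)⁻¹ * Real.log δ)
      refine h2.congr_fderiv ?_
      apply ContinuousLinearMap.ext
      intro y
      simp
    obtain ⟨b1, b2, b3⟩ := hC _ hu
    have hK : K0 x = δ⁻¹ • K0 (δ⁻¹ • x) := by
      rw [K0_smul _ (inv_ne_zero hpos.ne'), inv_inv, inv_smul_smul₀ hpos.ne']
    have hnx : ‖δ⁻¹ • x‖ = δ⁻¹ * ‖x‖ := by
      rw [norm_smul, Real.norm_of_nonneg (by positivity)]
    rw [hnx] at b2 b3
    refine ⟨?_, ?_, ?_⟩
    · rw [hgr, norm_smul, Real.norm_of_nonneg (by positivity : 0 ≤ δ⁻¹)]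
      linarith
    · rw [hgr, norm_smul, Real.norm_of_nonneg (by positivity : 0 ≤ δ⁻¹)]
      calc _ = ‖gradient (Hf ρ) (δ⁻¹ • x)‖ := by field_simp
        _ ≤ C := b1
    · rw [hgr, hK, ← smul_sub, norm_smul, Real.norm_of_nonneg (by positivity : 0 ≤ δ⁻¹)]
      calc _ = (‖gradient (Hf ρ) (δ⁻¹ • x) - K0 (δ⁻¹ • x)‖ * (δ⁻¹ * ‖x‖) ^ 2) * δ := by
            field_simp
        _ ≤ C * δ := by gcongr

noncomputable def Gt (χ : E2 → ℝ) (x : E2) : ℝ := Gfun χ x * (1 - χ ((8 : ℝ) • x))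

lemma Gt_contDiff (χ : E2 → ℝ) (hχsmooth : ContDiff ℝ (⊤ : ℕ∞) χ)
    (hχone : ∀ x, ‖x‖ ≤ 1 → χ x = 1) : ContDiff ℝ 1 (Gt χ) := by
  have hχ1 : ContDiff ℝ 1 χ := hχsmooth.of_le (by exact_mod_cast le_top)
  rw [contDiff_iff_contDiffAt]
  intro x
  by_cases hx : x = 0
  · have : Gt χ =ᶠ[𝓝 x] fun _ => 0 := by
      have : ∀ᶠ y in 𝓝 x, ‖y‖ < 1 / 8 := continuous_norm.continuousAt.eventually_lt
        continuousAt_const (by simp [hx])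
      filter_upwards [this] with y hy
      rw [Gt, hχone ((8 : ℝ) • y)]
      · simp
      · rw [norm_smul]
        norm_num
        linarith
    exact contDiffAt_const.congr_of_eventuallyEq this
  · unfold Gt Gfun
    have h1 : ContDiffAt ℝ 1 (fun y : E2 => Real.log ‖y‖) x :=
      (contDiffAt_norm ℝ hx).log (by simpa using hx)
    have h2 : ContDiffAt ℝ 1 (fun y : E2 => χ ((8 : ℝ) • y)) x :=
      (hχ1.comp (contDiff_id.const_smul (8 : ℝ))).contDiffAt
    exact ((contDiffAt_const.mul h1).mul hχ1.contDiffAt).mul (contDiffAt_const.sub h2)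

lemma Gt_lip (χ : E2 → ℝ) (hχsmooth : ContDiff ℝ (⊤ : ℕ∞) χ)
    (hχone : ∀ x, ‖x‖ ≤ 1 → χ x = 1) (hχzero : ∀ x, 2 ≤ ‖x‖ → χ x = 0) :
    ∃ C, LipschitzWith C (Gt χ) := by
  refine ContDiff.lipschitzWith_of_hasCompactSupport (𝕂 := ℝ) (n := 1) ?_
    (Gt_contDiff χ hχsmooth hχone) (by norm_num)
  refine HasCompactSupport.of_support_subset_isCompact (isCompact_closedBall 0 2) ?_
  intro x hx
  by_contra h
  apply hx
  simp at h
  simp [Gt, Gfun, hχzero x h.le]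

lemma Gt_eq (χ : E2 → ℝ) (hχzero : ∀ x, 2 ≤ ‖x‖ → χ x = 0) (x : E2) (hx : 1 / 4 ≤ ‖x‖) :
    Gfun χ x = Gt χ x := by
  rw [Gt, hχzero ((8 : ℝ) • x)]
  · simp
  · rw [norm_smul]
    norm_num
    linarith

lemma outer_bounds (χ : E2 → ℝ) (hχsmooth : ContDiff ℝ (⊤ : ℕ∞) χ)
    (hχone : ∀ x, ‖x‖ ≤ 1 → χ x = 1) (hχzero : ∀ x, 2 ≤ ‖x‖ → χ x = 0)
    (ρ : E2 → ℝ) (hρsmooth : ContDiff ℝ (⊤ : ℕ∞) ρ)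
    (hρsupp : Function.support ρ ⊆ Metric.closedBall 0 1) :
    ∃ C : ℝ, 0 ≤ C ∧ ∀ δ ∈ Set.Icc (0:ℝ) (1 / 8), ∀ x : E2, 1 / 2 ≤ ‖x‖ →
      ‖gradient (Gd χ ρ δ) x‖ ≤ C := by
  obtain ⟨M, hM⟩ := Gt_lip χ hχsmooth hχone hχzero
  have hρi : Integrable ρ := hρsmooth.continuous.integrable_of_hasCompactSupport (hcs_of ρ hρsupp)
  refine ⟨M + M * ∫ z, |ρ z|, by positivity, fun δ hδ x hx => ?_⟩
  have hnear : ∀ᶠ y in 𝓝 x, 3 / 8 < ‖y‖ := continuousAt_const.eventually_lt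
    continuous_norm.continuousAt (by linarith)
  have hI : 0 ≤ ∫ z, |ρ z| := by positivity
  have hM0 : (0:ℝ) ≤ M := M.2
  rw [norm_gradient_eq]
  rcases hδ.1.eq_or_lt with h0 | hpos
  · subst h0
    have hev : Gd χ ρ 0 =ᶠ[𝓝 x] Gt χ := by
      filter_upwards [hnear] with y hy
      rw [← Gt_eq χ hχzero y (by linarith)]
      simp [Gd]
    rw [hev.fderiv_eq]
    refine (norm_fderiv_le_of_lipschitz ℝ hM).trans ?_
    nlinarith
  · have hev : Gd χ ρ δ =ᶠ[𝓝 x] fun y => ∫ z, Gt χ (y - δ • z) * ρ z := by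
      filter_upwards [hnear] with y hy
      rw [Gd_eq χ ρ δ hpos]
      congr 1
      funext z
      by_cases hz0 : ρ z = 0
      · simp [hz0]
      have hz1 : ‖z‖ ≤ 1 := by simpa using hρsupp hz0
      rw [Gt_eq χ hχzero]
      have h1 : ‖y‖ ≤ ‖y - δ • z‖ + ‖δ • z‖ := by simpa using norm_add_le (y - δ • z) (δ • z)
      rw [norm_smul, Real.norm_of_nonneg hpos.le] at h1
      have := hδ.2
      nlinarith
    rw [hev.fderiv_eq]
    have hint : ∀ y, Integrable fun z => Gt χ (y - δ • z) * ρ z := by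
      intro y
      apply Continuous.integrable_of_hasCompactSupport
      · have := hM.continuous
        have := hρsmooth.continuous
        fun_prop
      · exact (hcs_of ρ hρsupp).mul_left
    have : ‖fderiv ℝ (fun y => ∫ z, Gt χ (y - δ • z) * ρ z) x‖ ≤ M * ∫ z, |ρ z| := by
      apply norm_fderiv_le_of_lip' ℝ (by positivity)
      refine Eventually.of_forall fun y => ?_
      rw [← integral_sub (hint y) (hint x)]
      calc _ ≤ ∫ z, (M * ‖y - x‖) * |ρ z| := by
            refine norm_integral_le_of_norm_le (hρi.abs.const_mul _) (Eventually.of_forall ?_)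
            intro z
            rw [← sub_mul, norm_mul, Real.norm_eq_abs (ρ z)]
            gcongr
            simpa using hM.norm_sub_le (y - δ • z) (x - δ • z)
        _ = _ := by
          rw [integral_const_mul]
          ring
    linarith

lemma far_zero (χ : E2 → ℝ) (hχzero : ∀ x, 2 ≤ ‖x‖ → χ x = 0)
    (ρ : E2 → ℝ) (hρsupp : Function.support ρ ⊆ Metric.closedBall 0 1)
    (δ : ℝ) (hδ : δ ∈ Set.Icc (0:ℝ) (1 / 8)) (x : E2) (hx : 3 ≤ ‖x‖) :
    gradient (Gd χ ρ δ) x = 0 := by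
  have hnear : ∀ᶠ y in 𝓝 x, 5 / 2 < ‖y‖ := continuousAt_const.eventually_lt
    continuous_norm.continuousAt (by linarith)
  have hev : Gd χ ρ δ =ᶠ[𝓝 x] fun _ => 0 := by
    filter_upwards [hnear] with y hy
    rcases hδ.1.eq_or_lt with h0 | hpos
    · subst h0
      simp [Gd, Gfun, hχzero y (by linarith)]
    · rw [Gd_eq χ ρ δ hpos]
      apply integral_eq_zero_of_ae
      refine Eventually.of_forall fun z => ?_
      by_cases hz0 : ρ z = 0
      · simp [hz0]
      have hz1 : ‖z‖ ≤ 1 := by simpa using hρsupp hz0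
      have h1 : ‖y‖ ≤ ‖y - δ • z‖ + ‖δ • z‖ := by simpa using norm_add_le (y - δ • z) (δ • z)
      rw [norm_smul, Real.norm_of_nonneg hpos.le] at h1
      have h2 := hδ.2
      have : χ (y - δ • z) = 0 := hχzero _ (by nlinarith)
      simp [Gfun, this]
  rw [hev.gradient_eq]
  exact gradient_fun_const x (0:ℝ)

lemma radial_ind (s : Set ℝ) (hs : MeasurableSet s) (hpos : s ⊆ Set.Ioi 0) (h : ℝ → ℝ)
    (hi : IntegrableOn (fun r => r * h r) s) :
    Integrable (fun x : E2 => s.indicator h ‖x‖) ∧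
    ∫ x : E2, s.indicator h ‖x‖ = (2 * Real.pi) * ∫ r in s, r * h r := by
  have e : (fun y : ℝ => y ^ (Module.finrank ℝ E2 - 1) • s.indicator h y) =
      s.indicator fun r => r * h r := by
    funext y
    by_cases hy : y ∈ s <;> simp [hy]
  constructor
  · rw [integrable_fun_norm_addHaar (volume : Measure E2), e]
    exact ((integrable_indicator_iff hs).2 hi).integrableOn
  · rw [integral_fun_norm_addHaar (volume : Measure E2), e, setIntegral_indicator hs,
      Set.inter_eq_right.2 hpos]
    have : (volume : Measure E2).real (Metric.ball 0 1) = Real.pi := by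
      simp [Measure.real, Real.pi_pos.le]
    rw [this]
    simp
    ring

noncomputable def mainR (δ : ℝ) : ℝ → ℝ :=
  (Set.Ico δ (1 / 2)).indicator fun r => (2 * Real.pi)⁻¹ ^ 2 * (r ^ 2)⁻¹

noncomputable def errR (δ : ℝ) (r : ℝ) : ℝ :=
  (Set.Ioo 0 δ).indicator (fun r => δ⁻¹ * r⁻¹) r +
  (Set.Ico δ (1 / 2)).indicator (fun r => δ * (r ^ 3)⁻¹) r +
  (Set.Ico (1 / 2) 3).indicator (fun _ => 1) r

lemma mainR_int (δ : ℝ) (hδ : 0 < δ) (hδ1 : δ ≤ 1 / 8) :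
    Integrable (fun x : E2 => mainR δ ‖x‖) ∧
    ∫ x : E2, mainR δ ‖x‖ = (2 * Real.pi)⁻¹ * (Real.log (1 / δ) - Real.log 2) := by
  have hsub : Set.Ico δ (1 / 2) ⊆ Set.Ioi (0:ℝ) := fun r hr => hδ.trans_le hr.1
  have hcont : ContinuousOn (fun r : ℝ => r * ((2 * Real.pi)⁻¹ ^ 2 * (r ^ 2)⁻¹))
      (Set.Icc δ (1 / 2)) := by
    refine continuousOn_id.mul (continuousOn_const.mul (ContinuousOn.inv₀ (by fun_prop) ?_))
    intro r hr
    have : 0 < r := hδ.trans_le hr.1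
    positivity
  obtain ⟨h1, h2⟩ := radial_ind (Set.Ico δ (1 / 2)) measurableSet_Ico hsub
    (fun r => (2 * Real.pi)⁻¹ ^ 2 * (r ^ 2)⁻¹)
    ((hcont.integrableOn_Icc).mono_set Set.Ico_subset_Icc_self)
  refine ⟨h1, ?_⟩
  rw [mainR, h2]
  have e : ∫ r in Set.Ico δ (1 / 2), r * ((2 * Real.pi)⁻¹ ^ 2 * (r ^ 2)⁻¹) =
      ∫ r in Set.Ico δ (1 / 2), (2 * Real.pi)⁻¹ ^ 2 * r⁻¹ := by
    refine setIntegral_congr_fun measurableSet_Ico fun r hr => ?_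
    have : 0 < r := hsub hr
    field_simp
  rw [e, integral_const_mul, integral_Ico_eq_integral_Ioc,
    ← intervalIntegral.integral_of_le (by linarith), integral_inv_of_pos hδ (by norm_num)]
  have : (1:ℝ) / 2 / δ = (1 / δ) / 2 := by ring
  rw [this, Real.log_div (by positivity) (by norm_num)]
  have := Real.pi_pos
  field_simp

lemma errR_int (δ : ℝ) (hδ : 0 < δ) (hδ1 : δ ≤ 1 / 8) :
    Integrable (fun x : E2 => errR δ ‖x‖) ∧
    ∫ x : E2, errR δ ‖x‖ ≤ (2 * Real.pi) * 10 := by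
  have hsub : Set.Ico δ (1 / 2) ⊆ Set.Ioi (0:ℝ) := fun r hr => hδ.trans_le hr.1
  have hsub3 : Set.Ico (1 / 2) 3 ⊆ Set.Ioi (0:ℝ) := fun r hr => lt_of_lt_of_le (by norm_num) hr.1
  have e1 : Set.EqOn (fun r : ℝ => r * (δ⁻¹ * r⁻¹)) (fun _ => δ⁻¹) (Set.Ioo 0 δ) := by
    intro r hr
    have : 0 < r := hr.1
    simp only
    field_simp
  have e2 : Set.EqOn (fun r : ℝ => r * (δ * (r ^ 3)⁻¹)) (fun r => δ * r ^ (-2 : ℤ))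
      (Set.Ico δ (1 / 2)) := by
    intro r hr
    have : 0 < r := hsub hr
    simp only [zpow_neg]
    norm_cast
    field_simp
  have hcont : ContinuousOn (fun r : ℝ => r * (δ * (r ^ 3)⁻¹))
      (Set.Icc δ (1 / 2)) := by
    refine continuousOn_id.mul (continuousOn_const.mul (ContinuousOn.inv₀ (by fun_prop) ?_))
    intro r hr
    have : 0 < r := hδ.trans_le hr.1
    positivity
  obtain ⟨a1, a2⟩ := radial_ind (Set.Ioo 0 δ) measurableSet_Ioo (fun r hr => hr.1)
    (fun r => δ⁻¹ * r⁻¹) (by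
      rw [integrableOn_congr_fun e1 measurableSet_Ioo]
      exact integrableOn_const (by simp))
  obtain ⟨b1, b2⟩ := radial_ind (Set.Ico δ (1 / 2)) measurableSet_Ico hsub
    (fun r => δ * (r ^ 3)⁻¹)
    ((hcont.integrableOn_Icc).mono_set Set.Ico_subset_Icc_self)
  obtain ⟨c1, c2⟩ := radial_ind (Set.Ico (1 / 2) 3) measurableSet_Ico hsub3 (fun _ => 1) (by
      have : Continuous fun r : ℝ => r * 1 := by fun_prop
      exact this.integrableOn_Icc.mono_set Set.Ico_subset_Icc_self)
  refine ⟨(a1.add b1).add c1, ?_⟩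
  unfold errR
  have hab : Integrable (fun x : E2 => (Set.Ioo 0 δ).indicator (fun r => δ⁻¹ * r⁻¹) ‖x‖ +
      (Set.Ico δ (1 / 2)).indicator (fun r => δ * (r ^ 3)⁻¹) ‖x‖) := a1.add b1
  rw [integral_add hab c1, integral_add a1 b1, a2, b2, c2,
    setIntegral_congr_fun measurableSet_Ioo e1, setIntegral_congr_fun measurableSet_Ico e2]
  have i1 : ∫ r in Set.Ioo 0 δ, δ⁻¹ = 1 := by
    simp [hδ.le, hδ.ne']
  have i2 : ∫ r in Set.Ico δ (1 / 2), δ * r ^ (-2 : ℤ) ≤ 1 := by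
    rw [integral_const_mul, integral_Ico_eq_integral_Ioc,
      ← intervalIntegral.integral_of_le (by linarith), integral_zpow]
    · norm_num
      have hdd : δ * δ⁻¹ = 1 := mul_inv_cancel₀ hδ.ne'
      have hee : δ * ((2 - δ⁻¹) / -1) = δ * δ⁻¹ - 2 * δ := by ring
      rw [hee, hdd]
      linarith
    · right
      refine ⟨by norm_num, ?_⟩
      rw [Set.uIcc_of_le (by linarith)]
      intro h
      linarith [h.1]
  have i3 : ∫ r in Set.Ico (1 / 2 : ℝ) 3, r * 1 ≤ 8 := by
    rw [integral_Ico_eq_integral_Ioc,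
      ← intervalIntegral.integral_of_le (by norm_num)]
    norm_num
  have := Real.pi_pos
  rw [i1, ← mul_add, ← mul_add]
  gcongr
  linarith

lemma measurable_gradient (f : E2 → ℝ) : Measurable (gradient f) := by
  unfold gradient
  exact (InnerProductSpace.toDual ℝ E2).symm.continuous.measurable.comp (measurable_fderiv ℝ f)

lemma pairing (χ : E2 → ℝ) (hχsmooth : ContDiff ℝ (⊤ : ℕ∞) χ)
    (hχone : ∀ x, ‖x‖ ≤ 1 → χ x = 1) (hχzero : ∀ x, 2 ≤ ‖x‖ → χ x = 0)
    (ρ : E2 → ℝ) (hρsmooth : ContDiff ℝ (⊤ : ℕ∞) ρ)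
    (hρsupp : Function.support ρ ⊆ Metric.closedBall 0 1) (hρint : ∫ x, ρ x = 1) :
    ∃ A : ℝ, 0 ≤ A ∧ ∀ δ₁ δ₂ : ℝ, 0 ≤ δ₁ → δ₁ ≤ δ₂ → 0 < δ₂ → δ₂ ≤ 1 / 8 →
      Integrable (fun x => ⟪gradient (Gd χ ρ δ₁) x, gradient (Gd χ ρ δ₂) x⟫) ∧
      |(∫ x, ⟪gradient (Gd χ ρ δ₁) x, gradient (Gd χ ρ δ₂) x⟫) -
        (2 * Real.pi)⁻¹ * (Real.log (1 / δ₂) - Real.log 2)| ≤ A := by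
  obtain ⟨C, hC1, hC⟩ := inner_bounds χ hχone ρ hρsmooth hρsupp hρint
  obtain ⟨M, hM0, hM⟩ := outer_bounds χ hχsmooth hχone hχzero ρ hρsmooth hρsupp
  set D := 2 * C ^ 2 + M ^ 2 with hD
  have hD0 : 0 ≤ D := by positivity
  refine ⟨D * ((2 * Real.pi) * 10), by positivity, fun δ₁ δ₂ h1 h12 h2 h28 => ?_⟩
  have m1 : δ₁ ∈ Set.Icc (0:ℝ) (1 / 8) := ⟨h1, h12.trans h28⟩
  have m2 : δ₂ ∈ Set.Icc (0:ℝ) (1 / 8) := ⟨h2.le, h28⟩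
  obtain ⟨hmi, hme⟩ := mainR_int δ₂ h2 h28
  obtain ⟨hei, hee⟩ := errR_int δ₂ h2 h28
  have key : ∀ᵐ x : E2, ‖⟪gradient (Gd χ ρ δ₁) x, gradient (Gd χ ρ δ₂) x⟫ - mainR δ₂ ‖x‖‖ ≤
      D * errR δ₂ ‖x‖ := by
    have hne : ∀ᵐ x : E2, x ≠ 0 := by simp [ae_iff]
    filter_upwards [hne] with x hx
    have hxp : 0 < ‖x‖ := by positivity
    rcases lt_or_ge ‖x‖ (1 / 2) with hxs | hxl
    · obtain ⟨p1, p2, p3⟩ := hC δ₁ m1 x hx hxs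
      obtain ⟨q1, q2, q3⟩ := hC δ₂ m2 x hx hxs
      have hKx := norm_K0_le x hx
      have hKK : ⟪K0 x, K0 x⟫ = (2 * Real.pi)⁻¹ ^ 2 * (‖x‖ ^ 2)⁻¹ := by
        rw [real_inner_self_eq_norm_sq, norm_K0 x hx]
        ring
      set g1 := gradient (Gd χ ρ δ₁) x
      set g2 := gradient (Gd χ ρ δ₂) x
      rcases lt_or_ge ‖x‖ δ₂ with hxd | hxd
      · have t1 : mainR δ₂ ‖x‖ = 0 := by
          simp [mainR, hxd]
        have t2 : errR δ₂ ‖x‖ = δ₂⁻¹ * ‖x‖⁻¹ := by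
          have n1 : ‖x‖ ∉ Set.Ico δ₂ (1 / 2) := fun h => absurd h.1 (not_le.2 hxd)
          have n2 : ‖x‖ ∉ Set.Ico (1 / 2 : ℝ) 3 := fun h => absurd h.1 (not_le.2 hxs)
          have n3 : ‖x‖ ∈ Set.Ioo 0 δ₂ := ⟨hxp, hxd⟩
          rw [errR, Set.indicator_of_mem n3, Set.indicator_of_notMem n1,
            Set.indicator_of_notMem n2]
          ring
        rw [t1, t2, sub_zero]
        rw [← le_div_iff₀ hxp] at p1
        rw [← le_div_iff₀ h2] at q2
        calc _ ≤ ‖g1‖ * ‖g2‖ := norm_inner_le_norm _ _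
          _ ≤ (C / ‖x‖) * (C / δ₂) := by gcongr
          _ = C ^ 2 * (δ₂⁻¹ * ‖x‖⁻¹) := by ring
          _ ≤ D * (δ₂⁻¹ * ‖x‖⁻¹) := by
            gcongr
            nlinarith [sq_nonneg C, sq_nonneg M]
      · have n1 : ‖x‖ ∈ Set.Ico δ₂ (1 / 2) := ⟨hxd, hxs⟩
        have n2 : ‖x‖ ∉ Set.Ico (1 / 2 : ℝ) 3 := fun h => absurd h.1 (not_le.2 hxs)
        have n3 : ‖x‖ ∉ Set.Ioo 0 δ₂ := fun h => absurd h.2 (not_lt.2 hxd)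
        rw [errR, mainR, Set.indicator_of_mem n1, Set.indicator_of_mem n1,
          Set.indicator_of_notMem n2, Set.indicator_of_notMem n3, ← hKK, zero_add, add_zero]
        have e : ⟪g1, g2⟫ - ⟪K0 x, K0 x⟫ = ⟪g1 - K0 x, g2⟫ + ⟪K0 x, g2 - K0 x⟫ := by
          rw [inner_sub_left, inner_sub_right]
          ring
        rw [← le_div_iff₀ hxp] at q1
        rw [← le_div_iff₀ (by positivity)] at p3 q3
        rw [e]
        calc _ ≤ ‖g1 - K0 x‖ * ‖g2‖ + ‖K0 x‖ * ‖g2 - K0 x‖ :=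
              (norm_add_le _ _).trans
                (add_le_add (norm_inner_le_norm _ _) (norm_inner_le_norm _ _))
          _ ≤ (C * δ₁ / ‖x‖ ^ 2) * (C / ‖x‖) + ‖x‖⁻¹ * (C * δ₂ / ‖x‖ ^ 2) := by gcongr
          _ ≤ (C * δ₂ / ‖x‖ ^ 2) * (C / ‖x‖) + ‖x‖⁻¹ * (C * δ₂ / ‖x‖ ^ 2) := by gcongr
          _ = (C ^ 2 + C) * (δ₂ * (‖x‖ ^ 3)⁻¹) := by
            field_simp
          _ ≤ D * (δ₂ * (‖x‖ ^ 3)⁻¹) := by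
            gcongr
            nlinarith [sq_nonneg M]
    · have n1 : ‖x‖ ∉ Set.Ico δ₂ (1 / 2) := fun h => absurd h.2 (not_lt.2 hxl)
      have n3 : ‖x‖ ∉ Set.Ioo 0 δ₂ := fun h => by linarith [h.2]
      rw [errR, mainR, Set.indicator_of_notMem n1, Set.indicator_of_notMem n1,
          Set.indicator_of_notMem n3, zero_add, zero_add, sub_zero]
      rcases lt_or_ge ‖x‖ 3 with hx3 | hx3
      · have n2 : ‖x‖ ∈ Set.Ico (1 / 2 : ℝ) 3 := ⟨hxl, hx3⟩
        rw [Set.indicator_of_mem n2]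
        calc _ ≤ ‖gradient (Gd χ ρ δ₁) x‖ * ‖gradient (Gd χ ρ δ₂) x‖ := norm_inner_le_norm _ _
          _ ≤ M * M := by
            gcongr
            · exact hM δ₁ m1 x hxl
            · exact hM δ₂ m2 x hxl
          _ ≤ D * 1 := by nlinarith [sq_nonneg C]
      · rw [far_zero χ hχzero ρ hρsupp δ₁ m1 x hx3, inner_zero_left, norm_zero]
        refine mul_nonneg hD0 (Set.indicator_nonneg (fun _ _ => zero_le_one) _)
  have hmeas : AEStronglyMeasurable
      (fun x => ⟪gradient (Gd χ ρ δ₁) x, gradient (Gd χ ρ δ₂) x⟫) (volume : Measure E2) :=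
    ((measurable_gradient _).inner (measurable_gradient _)).aestronglyMeasurable
  have hdiff : Integrable (fun x : E2 => ⟪gradient (Gd χ ρ δ₁) x, gradient (Gd χ ρ δ₂) x⟫ -
      mainR δ₂ ‖x‖) :=
    (hei.const_mul D).mono' (hmeas.sub hmi.aestronglyMeasurable) key
  have hint : Integrable (fun x => ⟪gradient (Gd χ ρ δ₁) x, gradient (Gd χ ρ δ₂) x⟫) := by
    have := hdiff.add hmi
    refine this.congr (Eventually.of_forall fun x => ?_)
    simp
  refine ⟨hint, ?_⟩
  rw [← hme, ← integral_sub hint hmi, ← Real.norm_eq_abs]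
  calc _ ≤ ∫ x : E2, D * errR δ₂ ‖x‖ := norm_integral_le_of_norm_le (hei.const_mul D) key
    _ ≤ _ := by
      rw [integral_const_mul]
      gcongr

theorem log_divergence_of_gradient_pairing
    (χ : EuclideanSpace ℝ (Fin 2) → ℝ)
    (hχsmooth : ContDiff ℝ (⊤ : ℕ∞) χ)
    (hχrange : ∀ x, χ x ∈ Set.Icc (0:ℝ) 1)
    (hχradial : ∀ x y, ‖x‖ = ‖y‖ → χ x = χ y)
    (hχone : ∀ x, ‖x‖ ≤ 1 → χ x = 1)
    (hχzero : ∀ x, 2 ≤ ‖x‖ → χ x = 0)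
    (ρ : EuclideanSpace ℝ (Fin 2) → ℝ)
    (hρsmooth : ContDiff ℝ (⊤ : ℕ∞) ρ)
    (hρeven : ∀ x, ρ (-x) = ρ x)
    (hρsupp : Function.support ρ ⊆ Metric.closedBall 0 1)
    (hρint : ∫ x, ρ x = 1) :
    ∃ δstar ∈ Set.Ioc (0:ℝ) (1/2), ∃ c₁ c₂ : ℝ, 0 < c₁ ∧ c₁ < c₂ ∧
      ∀ δ₁ ∈ Set.Icc (0:ℝ) δstar, ∀ δ₂ ∈ Set.Icc (0:ℝ) δstar, 0 < max δ₁ δ₂ →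
        Integrable (fun x => ⟪gradient (Gd χ ρ δ₁) x, gradient (Gd χ ρ δ₂) x⟫) ∧
        c₁ * Real.log (1 / max δ₁ δ₂)
          ≤ ∫ x, ⟪gradient (Gd χ ρ δ₁) x, gradient (Gd χ ρ δ₂) x⟫ ∧
        (∫ x, ⟪gradient (Gd χ ρ δ₁) x, gradient (Gd χ ρ δ₂) x⟫)
          ≤ c₂ * Real.log (1 / max δ₁ δ₂) := by
  obtain ⟨A, hA0, hA⟩ := pairing χ hχsmooth hχone hχzero ρ hρsmooth hρsupp hρint
  have hk := two_pi_inv_pos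
  set k := (2 * Real.pi)⁻¹ with hkdef
  have hl2 : 0 < Real.log 2 := Real.log_pos (by norm_num)
  set T := 2 * (A + k * Real.log 2) / k with hT
  refine ⟨min (1 / 8) (Real.exp (-T)), ⟨lt_min (by norm_num) (Real.exp_pos _),
    (min_le_left _ _).trans (by norm_num)⟩, k / 2, 2 * k, by positivity, by linarith, ?_⟩
  have main : ∀ δ₁ δ₂ : ℝ, 0 ≤ δ₁ → δ₁ ≤ δ₂ → 0 < δ₂ → δ₂ ≤ min (1 / 8) (Real.exp (-T)) →
      Integrable (fun x => ⟪gradient (Gd χ ρ δ₁) x, gradient (Gd χ ρ δ₂) x⟫) ∧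
        k / 2 * Real.log (1 / δ₂)
          ≤ ∫ x, ⟪gradient (Gd χ ρ δ₁) x, gradient (Gd χ ρ δ₂) x⟫ ∧
        (∫ x, ⟪gradient (Gd χ ρ δ₁) x, gradient (Gd χ ρ δ₂) x⟫)
          ≤ 2 * k * Real.log (1 / δ₂) := by
    intro δ₁ δ₂ h1 h12 h2 h3
    obtain ⟨hi, hb⟩ := hA δ₁ δ₂ h1 h12 h2 (h3.trans (min_le_left _ _))
    rw [abs_le] at hb
    have hlog : T ≤ Real.log (1 / δ₂) := by
      rw [one_div, Real.log_inv]
      have := Real.log_le_log h2 (h3.trans (min_le_right _ _))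
      rw [Real.log_exp] at this
      linarith
    rw [hT, div_le_iff₀ hk] at hlog
    have : 0 < k * Real.log 2 := by positivity
    refine ⟨hi, by nlinarith [hb.1], by nlinarith [hb.2]⟩
  intro δ₁ hδ₁ δ₂ hδ₂ hmax
  rcases le_total δ₁ δ₂ with h | h
  · rw [max_eq_right h] at hmax ⊢
    exact main δ₁ δ₂ hδ₁.1 h hmax hδ₂.2
  · rw [max_eq_left h] at hmax ⊢
    have := main δ₂ δ₁ hδ₂.1 h hmax hδ₁.2
    simp only [real_inner_comm] at this ⊢
    simpa only [real_inner_comm] using this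
end

section
/- Let c ∈ ℝ, let 0 < c₁ < c₂, let δ* ∈ (0,1/2], and let v be a continuous real-valued function on ([0,δ*] × [0,δ*]) \ {(0,0)} satisfying c₁ log(1/max(δ₁,δ₂)) ≤ v(δ₁,δ₂) ≤ c₂ log(1/max(δ₁,δ₂)) for all (δ₁,δ₂) in its domain. For δ ∈ (0,1) set λ_δ := δ^{1/δ}. Then there exist δ₀ ∈ (0, δ*), R₀ > 0 and a continuous function a : (0,δ₀) → ℝ with |a(δ)| ≤ R₀ δ for all δ ∈ (0,δ₀), such that for every δ ∈ (0,δ₀): c = v(δ,δ) - 2 a(δ) v(δ, λ_δ) + a(δ)² v(λ_δ, λ_δ) - 2 v(δ, 0) + 2 a(δ) v(λ_δ, 0). -/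
set_option maxHeartbeats 2000000 in
theorem renormalisation_constant_fixed_point
    (c : ℝ) (c₁ c₂ : ℝ) (hc₁ : 0 < c₁) (hc₁₂ : c₁ < c₂)
    (δstar : ℝ) (hδstar : δstar ∈ Set.Ioc (0:ℝ) (1/2))
    (v : ℝ → ℝ → ℝ)
    (hvcont : ContinuousOn (fun p : ℝ × ℝ => v p.1 p.2)
      ((Set.Icc 0 δstar ×ˢ Set.Icc 0 δstar) \ {((0:ℝ), (0:ℝ))}))
    (hvbound : ∀ δ₁ ∈ Set.Icc (0:ℝ) δstar, ∀ δ₂ ∈ Set.Icc (0:ℝ) δstar,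
      (δ₁, δ₂) ≠ ((0:ℝ), (0:ℝ)) →
      c₁ * Real.log (1 / max δ₁ δ₂) ≤ v δ₁ δ₂ ∧
      v δ₁ δ₂ ≤ c₂ * Real.log (1 / max δ₁ δ₂)) :
    ∃ δ₀ ∈ Set.Ioo (0:ℝ) δstar, ∃ R₀ > (0:ℝ), ∃ a : ℝ → ℝ,
      ContinuousOn a (Set.Ioo 0 δ₀) ∧
      (∀ δ ∈ Set.Ioo (0:ℝ) δ₀, |a δ| ≤ R₀ * δ) ∧
      ∀ δ ∈ Set.Ioo (0:ℝ) δ₀,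
        c = v δ δ - 2 * a δ * v δ (δ ^ (1/δ)) + (a δ) ^ 2 * v (δ ^ (1/δ)) (δ ^ (1/δ))
            - 2 * v δ 0 + 2 * a δ * v (δ ^ (1/δ)) 0 := by
  obtain ⟨hs0, hs1⟩ := hδstar
  have hc₂ : 0 < c₂ := hc₁.trans hc₁₂
  obtain ⟨K, hK⟩ : ∃ K, K = 3 * c₂ + 2 * |c| := ⟨_, rfl⟩
  have hKpos : 0 < K := by rw [hK]; positivity
  obtain ⟨d, hd⟩ : ∃ d, d = min (δstar / 2) (min (c₁ / (2 * c₂)) (c₁ ^ 2 / (4 * c₂ * K))) :=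
    ⟨_, rfl⟩
  have hd0 : 0 < d := by rw [hd]; positivity
  have hd1 : d ≤ δstar / 2 := by rw [hd]; exact min_le_left _ _
  have hd2 : d ≤ c₁ / (2 * c₂) := by
    rw [hd]; exact (min_le_right _ _).trans (min_le_left _ _)
  have hd3 : d ≤ c₁ ^ 2 / (4 * c₂ * K) := by
    rw [hd]; exact (min_le_right _ _).trans (min_le_right _ _)
  obtain ⟨A, hA⟩ : ∃ A : ℝ → ℝ, A = fun δ => v (δ ^ (1/δ)) (δ ^ (1/δ)) := ⟨_, rfl⟩
  obtain ⟨B, hB⟩ : ∃ B : ℝ → ℝ, B = fun δ => v (δ ^ (1/δ)) 0 - v δ (δ ^ (1/δ)) := ⟨_, rfl⟩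
  obtain ⟨C, hC⟩ : ∃ C : ℝ → ℝ, C = fun δ => v δ δ - 2 * v δ 0 - c := ⟨_, rfl⟩
  have hlam : ∀ δ ∈ Set.Ioo (0:ℝ) d, 0 < δ ^ (1/δ) ∧ δ ^ (1/δ) ≤ δ := by
    rintro δ ⟨h0, h1⟩
    refine ⟨Real.rpow_pos_of_pos h0 _, ?_⟩
    calc δ ^ (1/δ) ≤ δ ^ (1:ℝ) := by
          apply Real.rpow_le_rpow_of_exponent_ge h0 (by linarith)
          rw [le_div_iff₀ h0]; linarith
      _ = δ := Real.rpow_one δ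
  have hlamc : ContinuousOn (fun δ : ℝ => δ ^ (1/δ)) (Set.Ioo 0 d) := by
    apply ContinuousOn.rpow continuousOn_id
    · exact continuousOn_const.div continuousOn_id (fun x hx => hx.1.ne')
    · intro x hx; exact Or.inl hx.1.ne'
  have hcomp : ∀ f g : ℝ → ℝ, ContinuousOn f (Set.Ioo 0 d) → ContinuousOn g (Set.Ioo 0 d) →
      (∀ δ ∈ Set.Ioo (0:ℝ) d, (0 < f δ ∧ f δ ≤ δ) ∧ (0 ≤ g δ ∧ g δ ≤ δ)) →
      ContinuousOn (fun δ => v (f δ) (g δ)) (Set.Ioo 0 d) := by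
    intro f g hf hg h
    refine hvcont.comp (hf.prodMk hg) ?_
    intro δ hδ
    obtain ⟨⟨h1, h2⟩, h3, h4⟩ := h δ hδ
    have := hδ.2
    refine ⟨⟨⟨h1.le, by linarith⟩, ⟨h3, by linarith⟩⟩, ?_⟩
    intro h5
    simp only [Set.mem_singleton_iff, Prod.mk.injEq] at h5
    exact h1.ne' h5.1
  have hAc : ContinuousOn A (Set.Ioo 0 d) := by
    rw [hA]
    exact hcomp _ _ hlamc hlamc
      (fun δ hδ => ⟨hlam δ hδ, (hlam δ hδ).1.le, (hlam δ hδ).2⟩)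
  have hBc : ContinuousOn B (Set.Ioo 0 d) := by
    rw [hB]
    exact (hcomp _ (fun _ => 0) hlamc continuousOn_const
      (fun δ hδ => ⟨hlam δ hδ, le_rfl, hδ.1.le⟩)).sub
      (hcomp (fun δ => δ) _ continuousOn_id hlamc
      (fun δ hδ => ⟨⟨hδ.1, le_rfl⟩, (hlam δ hδ).1.le, (hlam δ hδ).2⟩))
  have hCc : ContinuousOn C (Set.Ioo 0 d) := by
    rw [hC]
    exact ((hcomp (fun δ => δ) (fun δ => δ) continuousOn_id continuousOn_id
      (fun δ hδ => ⟨⟨hδ.1, le_rfl⟩, hδ.1.le, le_rfl⟩)).sub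
      (continuousOn_const.mul (hcomp (fun δ => δ) (fun _ => 0) continuousOn_id continuousOn_const
      (fun δ hδ => ⟨⟨hδ.1, le_rfl⟩, le_rfl, hδ.1.le⟩)))).sub continuousOn_const
  have key : ∀ δ ∈ Set.Ioo (0:ℝ) d, ∃ M, 0 < M ∧ c₁ * M / 2 ≤ B δ ∧ |C δ| ≤ K * (δ * M) ∧
      0 ≤ B δ ^ 2 - A δ * C δ := by
    intro δ hδ
    obtain ⟨hl0, hl1⟩ := hlam δ hδ
    obtain ⟨h0, h1⟩ := hδ
    obtain ⟨M, hM⟩ : ∃ M, M = Real.log (1 / δ ^ (1/δ)) := ⟨_, rfl⟩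
    have hlogd : Real.log (1 / δ) = δ * M := by
      rw [hM, one_div, one_div, Real.log_inv, Real.log_inv, Real.log_rpow h0]
      field_simp
    have hL : 1 / 2 ≤ δ * M := by
      rw [← hlogd, one_div δ, Real.log_inv]
      have := Real.log_le_sub_one_of_pos h0
      linarith
    have hMpos : 0 < M := by
      by_contra hneg
      nlinarith
    have m0 : (0:ℝ) ∈ Set.Icc (0:ℝ) δstar := ⟨le_rfl, hs0.le⟩
    have md : δ ∈ Set.Icc (0:ℝ) δstar := ⟨h0.le, by linarith⟩
    have ml : δ ^ (1/δ) ∈ Set.Icc (0:ℝ) δstar := ⟨hl0.le, by linarith⟩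
    have b1 := hvbound _ ml _ ml (by simp only [ne_eq, Prod.mk.injEq]; exact fun h => hl0.ne' h.1)
    have b2 := hvbound _ ml _ m0 (by simp only [ne_eq, Prod.mk.injEq]; exact fun h => hl0.ne' h.1)
    have b3 := hvbound _ md _ ml (by simp only [ne_eq, Prod.mk.injEq]; exact fun h => h0.ne' h.1)
    have b4 := hvbound _ md _ md (by simp only [ne_eq, Prod.mk.injEq]; exact fun h => h0.ne' h.1)
    have b5 := hvbound _ md _ m0 (by simp only [ne_eq, Prod.mk.injEq]; exact fun h => h0.ne' h.1)
    rw [max_self, ← hM] at b1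
    rw [max_eq_left hl0.le, ← hM] at b2
    rw [max_eq_left hl1, hlogd] at b3
    rw [max_self, hlogd] at b4
    rw [max_eq_left h0.le, hlogd] at b5
    have e2 : δ * (2 * c₂) ≤ c₁ := (le_div_iff₀ (by positivity)).1 (h1.le.trans hd2)
    have e3 : δ * (4 * c₂ * K) ≤ c₁ ^ 2 := (le_div_iff₀ (by positivity)).1 (h1.le.trans hd3)
    have hBl : c₁ * M / 2 ≤ B δ := by
      simp only [hB]
      nlinarith [mul_le_mul_of_nonneg_right e2 hMpos.le]
    have hp1 : 0 ≤ c₁ * (δ * M) := by positivity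
    have hp2 : 0 ≤ c₂ * (δ * M) := by positivity
    have hCl : |C δ| ≤ K * (δ * M) := by
      have hcc : |c| ≤ 2 * |c| * (δ * M) := by nlinarith [abs_nonneg c]
      have hc1 := le_abs_self c
      have hc2 := neg_abs_le c
      simp only [hC, hK]
      rw [abs_le]
      constructor <;> nlinarith
    refine ⟨M, hMpos, hBl, hCl, ?_⟩
    have hA0 : 0 ≤ A δ := by
      simp only [hA]; exact le_trans (by positivity) b1.1
    have hA1 : A δ ≤ c₂ * M := by simp only [hA]; exact b1.2
    have hAC : A δ * C δ ≤ (c₂ * M) * (K * (δ * M)) :=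
      (mul_le_mul_of_nonneg_left (le_abs_self _) hA0).trans
        (mul_le_mul hA1 hCl (abs_nonneg _) (by positivity))
    have hB2 : (c₁ * M / 2) ^ 2 ≤ B δ ^ 2 := pow_le_pow_left₀ (by positivity) hBl 2
    nlinarith [mul_le_mul_of_nonneg_right e3 (sq_nonneg M)]
  refine ⟨d, ⟨hd0, by linarith⟩, 2 * K / c₁, by positivity,
    fun δ => -C δ / (B δ + Real.sqrt (B δ ^ 2 - A δ * C δ)), ?_, ?_, ?_⟩
  · refine hCc.neg.div (hBc.add ((hBc.pow 2).sub (hAc.mul hCc)).sqrt) ?_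
    intro δ hδ
    obtain ⟨M, hM, hb, -, -⟩ := key δ hδ
    have := Real.sqrt_nonneg (B δ ^ 2 - A δ * C δ)
    have : 0 < c₁ * M / 2 := by positivity
    exact ne_of_gt (by linarith)
  · intro δ hδ
    obtain ⟨M, hM, hb, hc, -⟩ := key δ hδ
    have hs := Real.sqrt_nonneg (B δ ^ 2 - A δ * C δ)
    have hp : 0 < c₁ * M / 2 := by positivity
    have hq : 0 < B δ + Real.sqrt (B δ ^ 2 - A δ * C δ) := by linarith
    rw [abs_div, abs_neg, abs_of_pos hq, div_le_iff₀ hq]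
    have hδ0 := hδ.1
    calc |C δ| ≤ K * (δ * M) := hc
      _ = 2 * K / c₁ * δ * (c₁ * M / 2) := by field_simp
      _ ≤ _ := mul_le_mul_of_nonneg_left (by linarith) (by positivity)
  · intro δ hδ
    obtain ⟨M, hM, hb, hc, hD⟩ := key δ hδ
    have hs := Real.sqrt_nonneg (B δ ^ 2 - A δ * C δ)
    have hss := Real.sq_sqrt hD
    have hp : 0 < c₁ * M / 2 := by positivity
    have hq : B δ + Real.sqrt (B δ ^ 2 - A δ * C δ) ≠ 0 := ne_of_gt (by linarith)
    simp only []
    generalize Real.sqrt (B δ ^ 2 - A δ * C δ) = S at *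
    have hquad : A δ * (-C δ / (B δ + S)) ^ 2 + 2 * B δ * (-C δ / (B δ + S)) + C δ = 0 := by
      field_simp
      linear_combination C δ * hss
    generalize -C δ / (B δ + S) = x at *
    simp only [hA, hB, hC] at hquad
    linear_combination -hquad
end

section
/- Let d ≥ 1, r ∈ ℝ and let V : ℝ^d → ℝ be continuous. Assume that for every integer n ≥ 1 there exists z_n ∈ ℝ^d such that |V(y) - r| ≤ 1/n for all y ∈ ℝ^d with |y - z_n| ≤ n. Then there exists a sequence (f_n) of smooth compactly supported functions on ℝ^d such that ‖f_n‖_{L²(ℝ^d)} = 1 for every n and ‖-Δ f_n + V f_n - r f_n‖_{L²(ℝ^d)} → 0 as n → ∞. -/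
open MeasureTheory Filter Topology

/-- The Laplacian of `f : ℝ^d → ℝ`, as the sum of second partial derivatives
in the coordinate directions. -/
noncomputable def lap {d : ℕ} (f : EuclideanSpace ℝ (Fin d) → ℝ)
    (x : EuclideanSpace ℝ (Fin d)) : ℝ :=
  ∑ i, fderiv ℝ (fun y => fderiv ℝ f y (EuclideanSpace.single i 1)) x
      (EuclideanSpace.single i 1)

theorem weyl_fderiv_scale {E : Type*} [NormedAddCommGroup E] [NormedSpace ℝ E]
    (g : E → ℝ) (hg : Differentiable ℝ g) (a s : ℝ) (z y v : E) :
    fderiv ℝ (fun x => a * g (s • (x - z))) y v = (a * s) * fderiv ℝ g (s • (y - z)) v := by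
  have h1 : HasFDerivAt (fun x : E => s • (x - z)) (s • ContinuousLinearMap.id ℝ E) y :=
    ((hasFDerivAt_id y).sub_const z).const_smul s
  have h2 := ((hg (s • (y - z))).hasFDerivAt.comp y h1).const_mul a
  have h3 : fderiv ℝ (fun x => a * g (s • (x - z))) y = _ := h2.fderiv
  rw [h3]
  simp [mul_assoc]

theorem weyl_lap_scale {d : ℕ} (g : EuclideanSpace ℝ (Fin d) → ℝ)
    (hg : ContDiff ℝ (⊤ : ℕ∞) g) (a s : ℝ) (z y : EuclideanSpace ℝ (Fin d)) :
    lap (fun x => a * g (s • (x - z))) y = (a * s * s) * lap g (s • (y - z)) := by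
  unfold lap
  rw [Finset.mul_sum]
  refine Finset.sum_congr rfl fun i _ => ?_
  have hd : Differentiable ℝ g := hg.differentiable (by simp)
  have hd' : Differentiable ℝ (fun y => fderiv ℝ g y (EuclideanSpace.single i 1)) := by
    have : ContDiff ℝ (⊤ : ℕ∞) (fun y => fderiv ℝ g y (EuclideanSpace.single i (1 : ℝ))) :=
      (hg.fderiv_right (m := (⊤ : ℕ∞)) le_rfl).clm_apply contDiff_const
    exact this.differentiable (by simp)
  have h1 : (fun y => fderiv ℝ (fun x => a * g (s • (x - z))) y (EuclideanSpace.single i 1))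
      = fun y => (a * s) * (fun y => fderiv ℝ g y (EuclideanSpace.single i 1)) (s • (y - z)) := by
    funext y
    exact weyl_fderiv_scale g hd a s z y _
  rw [h1, weyl_fderiv_scale _ hd']

theorem weyl_lap_cont {d : ℕ} (g : EuclideanSpace ℝ (Fin d) → ℝ)
    (hg : ContDiff ℝ (⊤ : ℕ∞) g) : Continuous (lap g) := by
  unfold lap
  refine continuous_finsetSum _ fun i _ => ?_
  have : ContDiff ℝ (⊤ : ℕ∞) (fun y => fderiv ℝ g y (EuclideanSpace.single i (1 : ℝ))) :=
    (hg.fderiv_right (m := (⊤ : ℕ∞)) le_rfl).clm_apply contDiff_const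
  exact (this.continuous_fderiv (by simp)).clm_apply continuous_const

theorem weyl_lap_supp {d : ℕ} (g : EuclideanSpace ℝ (Fin d) → ℝ)
    (hg : HasCompactSupport g) : HasCompactSupport (lap g) := by
  refine HasCompactSupport.intro hg (fun x hx => ?_)
  unfold lap
  refine Finset.sum_eq_zero fun i _ => ?_
  have h1 : tsupport (fun y => fderiv ℝ g y (EuclideanSpace.single i 1)) ⊆ tsupport g :=
    tsupport_fderiv_apply_subset ℝ _
  have h2 := tsupport_fderiv_apply_subset ℝ (f := fun y => fderiv ℝ g y (EuclideanSpace.single i 1))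
    (EuclideanSpace.single i (1 : ℝ))
  exact image_eq_zero_of_notMem_tsupport (f := fun x => fderiv ℝ (fun y => fderiv ℝ g y (EuclideanSpace.single i 1)) x
      (EuclideanSpace.single i 1)) (fun h => hx (h1 (h2 h)))

theorem weyl_norm_scale {d : ℕ} (s : ℝ) (hs : 0 < s) (z : EuclideanSpace ℝ (Fin d)) :
    ∃ K : ℝ, 0 < K ∧ ∀ g : EuclideanSpace ℝ (Fin d) → ℝ, Continuous g →
      eLpNorm (fun x => g (s • (x - z))) 2 volume = ENNReal.ofReal K * eLpNorm g 2 volume := by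
  set c : ℝ := |(s ^ Module.finrank ℝ (EuclideanSpace ℝ (Fin d)))⁻¹| with hc
  have hc0 : 0 < c := by positivity
  refine ⟨c ^ (1 / 2 : ℝ), by positivity, fun g hg => ?_⟩
  have hm : Measure.map (fun x : EuclideanSpace ℝ (Fin d) => s • (x - z)) volume
      = ENNReal.ofReal c • volume := by
    have : (fun x : EuclideanSpace ℝ (Fin d) => s • (x - z)) = (s • ·) ∘ (fun x => x - z) := rfl
    rw [this, ← Measure.map_map (by fun_prop) (by fun_prop), map_sub_right_eq_self,
      Measure.map_addHaar_smul _ hs.ne']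
  have h := eLpNorm_map_measure (μ := volume) (p := 2)
    (f := fun x : EuclideanSpace ℝ (Fin d) => s • (x - z)) (g := g)
    hg.aestronglyMeasurable (by fun_prop)
  rw [hm, eLpNorm_smul_measure_of_ne_top (by simp)] at h
  rw [← ENNReal.ofReal_rpow_of_pos hc0]
  simpa [Function.comp_def] using h.symm

theorem weyl_sequence_for_flat_potential
    (d : ℕ) (hd : 1 ≤ d) (r : ℝ)
    (V : EuclideanSpace ℝ (Fin d) → ℝ) (hV : Continuous V)
    (hflat : ∀ n : ℕ, 1 ≤ n → ∃ z : EuclideanSpace ℝ (Fin d),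
      ∀ y : EuclideanSpace ℝ (Fin d), ‖y - z‖ ≤ (n : ℝ) → |V y - r| ≤ 1 / (n : ℝ)) :
    ∃ f : ℕ → EuclideanSpace ℝ (Fin d) → ℝ,
      (∀ n, ContDiff ℝ (⊤ : ℕ∞) (f n) ∧ HasCompactSupport (f n) ∧
        eLpNorm (f n) 2 volume = 1) ∧
      Tendsto (fun n => eLpNorm
          (fun x => -lap (f n) x + V x * f n x - r * f n x) 2 volume)
        atTop (𝓝 0) := by
  classical
  let φ : ContDiffBump (0 : EuclideanSpace ℝ (Fin d)) := ⟨1/2, 1, by norm_num, by norm_num⟩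
  have hφ : ContDiff ℝ (⊤ : ℕ∞) φ := φ.contDiff
  have hφc : Continuous φ := φ.continuous
  have hφs : HasCompactSupport φ := φ.hasCompactSupport
  obtain ⟨M, hM⟩ : ∃ M, M = eLpNorm φ 2 volume := ⟨_, rfl⟩
  obtain ⟨L, hL⟩ : ∃ L, L = eLpNorm (lap φ) 2 volume := ⟨_, rfl⟩
  have hMt : M ≠ ⊤ := by
    rw [hM]; exact (hφc.memLp_of_hasCompactSupport hφs).eLpNorm_ne_top
  have hLt : L ≠ ⊤ := by
    rw [hL]
    exact ((weyl_lap_cont _ hφ).memLp_of_hasCompactSupport (weyl_lap_supp _ hφs)).eLpNorm_ne_top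
  have hM0 : M ≠ 0 := by
    intro h0
    rw [hM, eLpNorm_eq_zero_iff hφc.aestronglyMeasurable (by simp)] at h0
    have h1 : (φ : EuclideanSpace ℝ (Fin d) → ℝ) = 0 :=
      (hφc.ae_eq_iff_eq volume continuous_zero).1 h0
    have h2 : φ 0 = 1 := φ.one_of_mem_closedBall (by simp [φ])
    rw [h1] at h2
    simp at h2
  have hMr : 0 < M.toReal := ENNReal.toReal_pos hM0 hMt
  choose z hz using fun n : ℕ => hflat (n + 1) (by omega)
  have hspos : ∀ n : ℕ, (0 : ℝ) < ((n : ℝ) + 1)⁻¹ := fun n => by positivity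
  choose K hK0 hK using fun n : ℕ => weyl_norm_scale ((n : ℝ) + 1)⁻¹ (hspos n) (z n)
  let a : ℕ → ℝ := fun n => (K n * M.toReal)⁻¹
  have ha : ∀ n, 0 < a n := fun n => inv_pos.2 (mul_pos (hK0 n) hMr)
  let f : ℕ → EuclideanSpace ℝ (Fin d) → ℝ := fun n x => a n * φ (((n : ℝ) + 1)⁻¹ • (x - z n))
  have hsc : ∀ (n : ℕ) (b : ℝ) (g : EuclideanSpace ℝ (Fin d) → ℝ), 0 ≤ b → Continuous g →
      eLpNorm (fun x => b * g (((n : ℝ) + 1)⁻¹ • (x - z n))) 2 volume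
        = ENNReal.ofReal (b * K n) * eLpNorm g 2 volume := by
    intro n b g hb hg
    have h := eLpNorm_const_smul b (fun x => g (((n : ℝ) + 1)⁻¹ • (x - z n))) 2 volume
    rw [hK n g hg] at h
    rw [ENNReal.ofReal_mul hb, mul_assoc, ← Real.enorm_of_nonneg hb, ← h]
    rfl
  have hfc : ∀ n, ContDiff ℝ (⊤ : ℕ∞) (f n) := fun n =>
    contDiff_const.mul (hφ.comp ((contDiff_id.sub contDiff_const).const_smul (((n : ℝ) + 1)⁻¹)))
  have hfn : ∀ n, eLpNorm (f n) 2 volume = 1 := by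
    intro n
    have h := hsc n (a n) φ (ha n).le hφc
    rw [← hM] at h
    refine h.trans ?_
    rw [← ENNReal.ofReal_toReal hMt, ← ENNReal.ofReal_mul (mul_pos (ha n) (hK0 n)).le,
      ENNReal.ofReal_eq_one]
    have := (hK0 n).ne'
    have := hMr.ne'
    simp only [a]
    field_simp
  have hf0 : ∀ (n : ℕ) x, ((n : ℝ) + 1) < ‖x - z n‖ → f n x = 0 := by
    intro n x hx
    have : φ (((n : ℝ) + 1)⁻¹ • (x - z n)) = 0 := by
      apply φ.zero_of_le_dist
      rw [dist_zero_right, norm_smul, Real.norm_of_nonneg (hspos n).le]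
      change (1 : ℝ) ≤ _
      rw [inv_mul_eq_div, le_div_iff₀ (by positivity)]
      linarith
    simp only [f, this, mul_zero]
  refine ⟨f, fun n => ⟨hfc n, ?_, hfn n⟩, ?_⟩
  · refine HasCompactSupport.intro (isCompact_closedBall (z n) ((n : ℝ) + 1)) fun x hx => hf0 n x ?_
    simpa [dist_eq_norm] using hx
  have hbd : ∀ n, eLpNorm (fun x => -lap (f n) x + V x * f n x - r * f n x) 2 volume
      ≤ ENNReal.ofReal (1 / ((n : ℝ) + 1)) * (ENNReal.ofReal M.toReal⁻¹ * L + 1) := by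
    intro n
    have e : (fun x => -lap (f n) x + V x * f n x - r * f n x)
        = (fun x => -lap (f n) x) + (fun x => (V x - r) * f n x) := by
      funext x; simp only [Pi.add_apply]; ring
    have hlc : Continuous (lap (f n)) := weyl_lap_cont _ (hfc n)
    have hfcc : Continuous (f n) := (hfc n).continuous
    rw [e]
    refine (eLpNorm_add_le (by fun_prop) (by fun_prop) (by norm_num)).trans ?_
    rw [mul_add, mul_one]
    refine add_le_add ?_ ?_
    · have h1 : eLpNorm (fun x => -lap (f n) x) 2 volume = eLpNorm (lap (f n)) 2 volume :=
        eLpNorm_neg (lap (f n)) 2 volume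
      have h2 : lap (f n) = fun x => (a n * ((n : ℝ) + 1)⁻¹ * ((n : ℝ) + 1)⁻¹) *
          lap φ (((n : ℝ) + 1)⁻¹ • (x - z n)) := by
        funext x
        exact weyl_lap_scale φ hφ _ _ _ _
      have hb : 0 ≤ a n * ((n : ℝ) + 1)⁻¹ * ((n : ℝ) + 1)⁻¹ := by
        have := ha n
        positivity
      rw [h1, h2, hsc n _ _ hb (weyl_lap_cont _ hφ), ← hL, ← mul_assoc,
        ← ENNReal.ofReal_mul (by positivity)]
      refine mul_le_mul_left (ENNReal.ofReal_le_ofReal ?_) L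
      have hk := (hK0 n).ne'
      have e2 : a n * ((n : ℝ) + 1)⁻¹ * ((n : ℝ) + 1)⁻¹ * K n
          = ((n : ℝ) + 1)⁻¹ * (((n : ℝ) + 1)⁻¹ * M.toReal⁻¹) := by
        simp only [a]
        field_simp
      rw [e2, one_div]
      have h3 : ((n : ℝ) + 1)⁻¹ ≤ 1 := inv_le_one_of_one_le₀ (by linarith [n.cast_nonneg (α := ℝ)])
      have h4 : ((n : ℝ) + 1)⁻¹ * M.toReal⁻¹ ≤ M.toReal⁻¹ :=
        mul_le_of_le_one_left (by positivity) h3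
      gcongr
    · have h := eLpNorm_const_smul (1 / ((n : ℝ) + 1)) (f n) 2 volume
      rw [hfn n, mul_one, Real.enorm_of_nonneg (by positivity)] at h
      rw [← h]
      refine eLpNorm_mono fun x => ?_
      simp only [Pi.smul_apply, smul_eq_mul, norm_mul]
      rcases le_or_gt ‖x - z n‖ ((n : ℝ) + 1) with hx | hx
      · have h5 := hz n x (by push_cast; exact hx)
        push_cast at h5
        have h6 : ‖V x - r‖ ≤ ‖1 / ((n : ℝ) + 1)‖ := by
          rw [Real.norm_eq_abs, Real.norm_of_nonneg (by positivity)]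
          exact h5
        gcongr
      · simp [hf0 n x hx]
  refine tendsto_of_tendsto_of_tendsto_of_le_of_le tendsto_const_nhds ?_
    (fun n => zero_le) hbd
  have ht : Tendsto (fun n : ℕ => ENNReal.ofReal (1 / ((n : ℝ) + 1))) atTop (𝓝 0) := by
    simpa using ENNReal.tendsto_ofReal tendsto_one_div_add_atTop_nhds_zero_nat
  have hC : ENNReal.ofReal M.toReal⁻¹ * L + 1 ≠ ⊤ := by
    simp [ENNReal.mul_eq_top, hLt]
  simpa using ENNReal.Tendsto.mul_const ht (Or.inr hC)
end
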